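/- arXiv:1510.03381 — 5 statements merged into one kernel-verified Lean document; each statement's English description precedes it below -/
import Mathlib

section
/- Let G be an assigned graph with vertex set partitioned as I ⊔ F ⊔ U. If ρ_G(H) > 0 for every nonempty subgraph H of G, then G has an I,F-partition 𝓘 ⊔ 𝓕 such that I ⊆ 𝓘 and F ⊆ 𝓕. -/
open SimpleGraph

noncomputable def edgeCount {V : Type*} (G : SimpleGraph V) : ℕ := Nat.card G.edgeSet

noncomputable def deg {V : Type*} (G : SimpleGraph V) (v : V) : ℕ := Nat.card (G.neighborSet v)

def TwoIndependent {V : Type*} (G : SimpleGraph V) (S : Set V) : Prop :=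
  ∀ u ∈ S, ∀ v ∈ S, u ≠ v → ¬ G.Adj u v ∧ ∀ w, ¬ (G.Adj u w ∧ G.Adj w v)

def IsIFPartition {V : Type*} (G : SimpleGraph V) (A B : Set V) : Prop :=
  A ∪ B = Set.univ ∧ Disjoint A B ∧ TwoIndependent G A ∧ (G.induce B).IsAcyclic

def IsAssignment {V : Type*} (I F U : Set V) : Prop :=
  I ∪ F ∪ U = Set.univ ∧ Disjoint I F ∧ Disjoint I U ∧ Disjoint F U

noncomputable def rho {V : Type*} (G : SimpleGraph V) (I F U : Set V) (H : G.Subgraph) : ℤ :=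
  (H.verts ∩ I).ncard + 4 * (H.verts ∩ F).ncard + 5 * (H.verts ∩ U).ncard
    - 4 * Nat.card H.edgeSet

noncomputable def rhoSet {V : Type*} (G : SimpleGraph V) (I F U : Set V) (S : Set V) : ℤ :=
  (S ∩ I).ncard + 4 * (S ∩ F).ncard + 5 * (S ∩ U).ncard - 4 * edgeCount (G.induce S)

def IsCounterexample {V : Type*} [Fintype V] (G : SimpleGraph V) (I F U : Set V) : Prop :=
  IsAssignment I F U ∧
  (∀ H : G.Subgraph, H.verts.Nonempty → 0 < rho G I F U H) ∧
  ¬ ∃ A B : Set V, IsIFPartition G A B ∧ I ⊆ A ∧ F ⊆ B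

def IsMinCounterexample {V : Type*} [Fintype V] (G : SimpleGraph V) (I F U : Set V) : Prop :=
  IsCounterexample G I F U ∧
  ∀ (n : ℕ) (G' : SimpleGraph (Fin n)) (I' F' U' : Set (Fin n)),
    IsCounterexample G' I' F' U' →
    Fintype.card V + edgeCount G ≤ n + edgeCount G'

def IsThread {V : Type*} (G : SimpleGraph V) (I F U : Set V) (p : List V) : Prop :=
  p ≠ [] ∧ p.Nodup ∧ p.Chain' G.Adj ∧ (∀ v ∈ p, v ∈ U ∧ deg G v = 2) ∧
  (∀ w, w ∉ p → (∃ a ∈ p, G.Adj a w) → 3 ≤ deg G w ∨ w ∈ I ∪ F)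

def BordersThread {V : Type*} (G : SimpleGraph V) (p : List V) (w : V) : Prop :=
  w ∉ p ∧ ∃ a ∈ p, G.Adj a w

def IsStarForest {V : Type*} (H : SimpleGraph V) : Prop :=
  H.IsAcyclic ∧ ∀ a b c d : V, H.Adj a b → H.Adj b c → H.Adj c d → a = c ∨ b = d

def IsStarColoring {V : Type*} {k : ℕ} (G : SimpleGraph V) (c : V → Fin k) : Prop :=
  (∀ u v, G.Adj u v → c u ≠ c v) ∧
  ∀ i j : Fin k, IsStarForest (G.induce {v | c v = i ∨ c v = j})

def StarColorable {V : Type*} (G : SimpleGraph V) (k : ℕ) : Prop :=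
  ∃ c : V → Fin k, IsStarColoring G c

def MadLt {V : Type*} (G : SimpleGraph V) (q : ℚ) : Prop :=
  ∀ H : G.Subgraph, H.verts.Nonempty →
    (2 * (Nat.card H.edgeSet : ℚ)) / (H.verts.ncard : ℚ) < q

namespace IFP

section Aux

open scoped Classical

variable {α : Type*}

/-- number of neighbours of `v` inside `T` -/
noncomputable def dg (G : SimpleGraph α) (T : Finset α) (v : α) : ℕ :=
  (T.filter (fun u => G.Adj v u)).card

/-- degree sum inside `T`, i.e. twice the number of edges -/
noncomputable def es (G : SimpleGraph α) (T : Finset α) : ℕ := ∑ v ∈ T, dg G T v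

noncomputable def cross (G : SimpleGraph α) (A B : Finset α) : ℕ := ∑ a ∈ A, dg G B a

/-- weight: `P` marks vertices forced into the forest, `Q` marks vertices which, if they are
in the forest, may have no neighbour in the independent set. -/
noncomputable def wt (P Q : Finset α) (v : α) : ℤ :=
  5 - (if v ∈ P then 1 else 0) - (if v ∈ Q then 2 else 0)

noncomputable def pot (G : SimpleGraph α) (P Q T : Finset α) : ℤ :=
  ∑ v ∈ T, wt P Q v - 2 * es G T

lemma dg_mono (G : SimpleGraph α) {S T : Finset α} (h : S ⊆ T) (v : α) : dg G S v ≤ dg G T v :=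
  Finset.card_le_card (Finset.filter_subset_filter _ h)

lemma dg_congr {G G' : SimpleGraph α} {T : Finset α} {v : α}
    (h : ∀ u ∈ T, (G.Adj v u ↔ G'.Adj v u)) : dg G T v = dg G' T v := by
  unfold dg
  congr 1
  exact Finset.filter_congr h

lemma es_congr {G G' : SimpleGraph α} {T : Finset α}
    (h : ∀ v ∈ T, ∀ u ∈ T, (G.Adj v u ↔ G'.Adj v u)) : es G T = es G' T :=
  Finset.sum_congr rfl (fun v hv => dg_congr (h v hv))

lemma dg_union (G : SimpleGraph α) {A B : Finset α} (h : Disjoint A B) (v : α) :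
    dg G (A ∪ B) v = dg G A v + dg G B v := by
  unfold dg
  rw [Finset.filter_union, Finset.card_union_of_disjoint]
  exact Finset.disjoint_filter_filter h

lemma cross_comm (G : SimpleGraph α) (A B : Finset α) : cross G A B = cross G B A := by
  unfold cross dg
  have := Finset.sum_card_bipartiteAbove_eq_sum_card_bipartiteBelow (s := A) (t := B)
    (fun a b => G.Adj a b)
  simp only [Finset.bipartiteAbove, Finset.bipartiteBelow] at this
  rw [this]
  simp only [G.adj_comm]

lemma es_union (G : SimpleGraph α) {A B : Finset α} (h : Disjoint A B) :
    es G (A ∪ B) = es G A + es G B + 2 * cross G A B := by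
  have h2 := cross_comm G A B
  unfold es
  rw [Finset.sum_union h]
  simp only [dg_union G h, Finset.sum_add_distrib]
  unfold cross at *
  omega

lemma pot_union (G : SimpleGraph α) (P Q : Finset α) {A B : Finset α} (h : Disjoint A B) :
    pot G P Q (A ∪ B) = pot G P Q A + pot G P Q B - 4 * cross G A B := by
  unfold pot
  rw [es_union G h, Finset.sum_union h]
  push_cast
  ring

lemma dg_singleton_le (G : SimpleGraph α) (v u : α) : dg G {v} u ≤ 1 := by
  unfold dg
  exact (Finset.card_filter_le _ _).trans (by simp)

lemma es_singleton (G : SimpleGraph α) (v : α) : es G {v} = 0 := by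
  simp [es, dg, Finset.filter_singleton]

lemma pot_singleton (G : SimpleGraph α) (P Q : Finset α) (v : α) :
    pot G P Q {v} = wt P Q v := by
  simp [pot, es_singleton]

lemma cross_singleton (G : SimpleGraph α) (T : Finset α) (v : α) :
    cross G T {v} = dg G T v := by
  rw [cross_comm]; simp [cross]

lemma es_insert (G : SimpleGraph α) {T : Finset α} {v : α} (h : v ∉ T) :
    es G (insert v T) = es G T + 2 * dg G T v := by
  have : insert v T = T ∪ {v} := by ext; simp [or_comm]
  rw [this, es_union G (by simpa using h), es_singleton, cross_singleton]
  ring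

lemma pot_insert (G : SimpleGraph α) (P Q : Finset α) {T : Finset α} {v : α} (h : v ∉ T) :
    pot G P Q (insert v T) = pot G P Q T + wt P Q v - 4 * dg G T v := by
  unfold pot
  rw [es_insert G h, Finset.sum_insert h]
  push_cast
  ring

lemma wt_ge (P Q : Finset α) (v : α) : 2 ≤ wt P Q v := by
  unfold wt; split_ifs <;> norm_num

lemma wt_le (P Q : Finset α) (v : α) : wt P Q v ≤ 5 := by
  unfold wt; split_ifs <;> norm_num

lemma pot_empty (G : SimpleGraph α) (P Q : Finset α) : pot G P Q ∅ = 0 := by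
  simp [pot, es]

/-- no nonempty subset with all inner degrees at least two -/
def Forest (G : SimpleGraph α) (B : Finset α) : Prop :=
  ∀ T ⊆ B, (∀ v ∈ T, 2 ≤ dg G T v) → T = ∅

lemma Forest.mono {G : SimpleGraph α} {B C : Finset α} (h : Forest G C) (hs : B ⊆ C) :
    Forest G B := fun T hT => h T (hT.trans hs)

lemma Forest.es_le {G : SimpleGraph α} {B : Finset α} (h : Forest G B) :
    ∀ T ⊆ B, T.Nonempty → es G T + 2 ≤ 2 * T.card := by
  intro T
  induction T using Finset.strongInduction with
  | H T ih =>
    intro hT hne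
    by_contra hcon
    have : ∃ v ∈ T, dg G T v ≤ 1 := by
      by_contra! hc
      exact hne.ne_empty (h T hT (fun v hv => hc v hv))
    obtain ⟨v, hv, hd⟩ := this
    have hd' := dg_mono G (Finset.erase_subset v T) v
    have hins := es_insert G (T := T.erase v) (v := v) (by simp)
    rw [Finset.insert_erase hv] at hins
    have hc : (T.erase v).card + 1 = T.card := Finset.card_erase_add_one hv
    rcases (T.erase v).eq_empty_or_nonempty with h0 | h0
    · have e0 : es G (∅ : Finset α) = 0 := by simp [es]
      have d0 : dg G ∅ v = 0 := by simp [dg]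
      rw [h0, e0, d0] at hins
      rw [h0, Finset.card_empty] at hc
      omega
    · have := ih (T.erase v) (Finset.erase_ssubset hv) ((Finset.erase_subset v T).trans hT) h0
      omega

lemma core_es {G : SimpleGraph α} {T : Finset α} (h : ∀ v ∈ T, 2 ≤ dg G T v) :
    2 * T.card ≤ es G T := by
  unfold es
  have := Finset.sum_le_sum (s := T) (f := fun _ => 2) (g := fun v => dg G T v) h
  simp at this
  omega

structure Col (G : SimpleGraph α) (P Q W A : Finset α) : Prop where
  sub : A ⊆ W
  dP : ∀ v ∈ A, v ∉ P
  dQ : ∀ v ∈ W, v ∈ Q → v ∉ A → ∀ u ∈ A, ¬ G.Adj v u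
  ind : ∀ u ∈ A, ∀ v ∈ A, ¬ G.Adj u v
  ind2 : ∀ c ∈ W, ∀ u ∈ A, ∀ v ∈ A, G.Adj c u → G.Adj c v → u = v
  fst : Forest G (W \ A)

def Good (G : SimpleGraph α) (P Q W : Finset α) : Prop :=
  ∀ T ⊆ W, T.Nonempty → 1 ≤ pot G P Q T

/-- induction hypothesis below size `n` -/
def IH (α : Type*) (n : ℕ) : Prop :=
  ∀ (G : SimpleGraph α) (P Q W : Finset α), W.card < n → Good G P Q W → ∃ A, Col G P Q W A

/-- the change of potential under enlarging the marks -/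
lemma pot_mark (G : SimpleGraph α) (P Q X Y T : Finset α) :
    pot G P Q T ≤ pot G (P ∪ X) (Q ∪ Y) T + (T ∩ X).card + 2 * (T ∩ Y).card := by
  have h1 : ∀ v ∈ T, wt P Q v ≤ wt (P ∪ X) (Q ∪ Y) v + (if v ∈ X then 1 else 0)
      + 2 * (if v ∈ Y then 1 else 0) := by
    intro v _
    unfold wt
    simp only [Finset.mem_union]
    by_cases a : v ∈ P <;> by_cases b : v ∈ Q <;> by_cases c : v ∈ X <;> by_cases d : v ∈ Y <;>
      simp [a, b, c, d]
  have h2 := Finset.sum_le_sum h1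
  rw [Finset.sum_add_distrib, Finset.sum_add_distrib, ← Finset.mul_sum, Finset.sum_boole,
    Finset.sum_boole, Finset.filter_mem_eq_inter, Finset.filter_mem_eq_inter] at h2
  unfold pot
  linarith


lemma dg_pos {G : SimpleGraph α} {T : Finset α} {v u : α} (hu : u ∈ T) (h : G.Adj v u) :
    1 ≤ dg G T v :=
  Finset.card_pos.mpr ⟨u, by simp [hu, h]⟩

lemma dg_eq_zero {G : SimpleGraph α} {T : Finset α} {v : α} (h : ∀ u ∈ T, ¬ G.Adj v u) :
    dg G T v = 0 := by
  unfold dg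
  rw [Finset.card_eq_zero, Finset.filter_eq_empty_iff]
  exact h

lemma dg_le_one_unique {G : SimpleGraph α} {T : Finset α} {v a b : α} (h : dg G T v ≤ 1)
    (ha : a ∈ T) (hb : b ∈ T) (h1 : G.Adj v a) (h2 : G.Adj v b) : a = b :=
  Finset.card_le_one.mp h a (by simp [ha, h1]) b (by simp [hb, h2])

lemma dg_two {G : SimpleGraph α} {T : Finset α} {v a b : α} (hab : a ≠ b)
    (ha : a ∈ T) (hb : b ∈ T) (h1 : G.Adj v a) (h2 : G.Adj v b) : 2 ≤ dg G T v := by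
  have : ({a, b} : Finset α) ⊆ T.filter (fun u => G.Adj v u) := by
    intro x hx
    simp only [Finset.mem_insert, Finset.mem_singleton] at hx
    rcases hx with rfl | rfl <;> simp [*]
  have := Finset.card_le_card this
  rwa [Finset.card_pair hab] at this

lemma Col.weaken {G : SimpleGraph α} {P P0 Q W A : Finset α} (h : Col G P0 Q W A) (hP : P ⊆ P0) :
    Col G P Q W A :=
  ⟨h.sub, fun v hv hp => h.dP v hv (hP hp), h.dQ, h.ind, h.ind2, h.fst⟩

/-- the gadget graph: `g` is reconnected exactly to `Y` -/
def gad (G : SimpleGraph α) (g : α) (Y : Finset α) (hg : g ∉ Y) : SimpleGraph α where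
  Adj u v := (u ≠ g ∧ v ≠ g ∧ G.Adj u v) ∨ (u = g ∧ v ∈ Y) ∨ (v = g ∧ u ∈ Y)
  symm := ⟨by
    rintro u v (⟨a, b, c⟩ | h | h)
    · exact Or.inl ⟨b, a, c.symm⟩
    · exact Or.inr (Or.inr h)
    · exact Or.inr (Or.inl h)⟩
  loopless := ⟨by
    rintro u (⟨a, b, c⟩ | ⟨rfl, h⟩ | ⟨rfl, h⟩)
    · exact G.loopless.irrefl _ c
    · exact hg h
    · exact hg h⟩

lemma gad_adj_of_ne {G : SimpleGraph α} {g : α} {Y : Finset α} {hg : g ∉ Y} {u v : α}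
    (hu : u ≠ g) (hv : v ≠ g) : (gad G g Y hg).Adj u v ↔ G.Adj u v := by
  simp [gad, hu, hv]

lemma gad_adj_g {G : SimpleGraph α} {g : α} {Y : Finset α} {hg : g ∉ Y} {v : α} :
    (gad G g Y hg).Adj g v ↔ v ∈ Y := by
  simp only [gad, ne_eq, not_true_eq_false, false_and, true_and, false_or]
  constructor
  · rintro (h | ⟨rfl, h⟩)
    · exact h
    · exact absurd h hg
  · exact Or.inl

lemma gadget {G : SimpleGraph α} {P Q W S AS : Finset α} (ih : IH α W.card)
    (hgood : Good G P Q W) (hS : S ⊆ W) (hcard : 2 ≤ S.card) (hpS : pot G P Q S ≤ 2)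
    (hAS : Col G P Q S AS)
    (h1 : ∀ r ∈ W \ S, dg G S r ≤ 1)
    (h2 : ∀ r ∈ W \ S, r ∈ Q → ∀ s ∈ AS, ¬ G.Adj r s)
    (hA : ∀ T ⊆ W \ S, T.Nonempty →
      1 + 3 * ((T ∩ (W \ S).filter (fun r => ∃ s ∈ AS, G.Adj r s)).card : ℤ) ≤ pot G P Q T) :
    ∃ A, Col G P Q W A := by
  set X := (W \ S).filter (fun r => ∃ s ∈ AS, G.Adj r s) with hX
  set Y := (W \ S).filter (fun r => ∃ s ∈ S \ AS, G.Adj r s) with hY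
  obtain ⟨g, hgS⟩ : S.Nonempty := Finset.card_pos.mp (by omega)
  have hgY : g ∉ Y := by simp [hY, hgS]
  have hgX : g ∉ X := by simp [hX, hgS]
  have hASS := hAS.sub
  set R := W \ S with hR
  have hgR : g ∉ R := by simp [hR, hgS]
  have hneR : ∀ r ∈ R, r ≠ g := fun r hr h => hgR (h ▸ hr)
  have hRS : Disjoint R S := Finset.sdiff_disjoint
  set G' := gad G g Y hgY with hG'
  have hadj : ∀ u ∈ R, ∀ v ∈ R, (G'.Adj u v ↔ G.Adj u v) := fun u hu v hv =>
    gad_adj_of_ne (hneR u hu) (hneR v hv)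
  have hXR : X ⊆ R := Finset.filter_subset _ _
  have hYR : Y ⊆ R := Finset.filter_subset _ _
  -- cross counting
  have hdgS : ∀ r ∈ R, dg G S r = (if r ∈ X then 1 else 0) + (if r ∈ Y then 1 else 0) := by
    intro r hr
    have hle := h1 r hr
    by_cases hx : r ∈ X
    · obtain ⟨s, hs, hrs⟩ := (Finset.mem_filter.mp hx).2
      have hy : r ∉ Y := by
        intro hy
        obtain ⟨s', hs', hrs'⟩ := (Finset.mem_filter.mp hy).2
        have := dg_le_one_unique hle (hASS hs) (Finset.mem_sdiff.mp hs').1 hrs hrs'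
        exact (Finset.mem_sdiff.mp hs').2 (this ▸ hs)
      have := dg_pos (hASS hs) hrs
      simp only [hx, hy, if_true, if_false]; omega
    · by_cases hy : r ∈ Y
      · obtain ⟨s', hs', hrs'⟩ := (Finset.mem_filter.mp hy).2
        have := dg_pos (Finset.mem_sdiff.mp hs').1 hrs'
        simp only [hx, hy, if_true, if_false]; omega
      · simp only [hx, hy, if_false]
        apply dg_eq_zero
        intro u hu hru
        by_cases hua : u ∈ AS
        · exact hx (Finset.mem_filter.mpr ⟨hr, u, hua, hru⟩)
        · exact hy (Finset.mem_filter.mpr ⟨hr, u, Finset.mem_sdiff.mpr ⟨hu, hua⟩, hru⟩)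
  have hcross : ∀ T ⊆ R, cross G T S = (T ∩ X).card + (T ∩ Y).card := by
    intro T hT
    unfold cross
    rw [Finset.sum_congr rfl (fun r hr => hdgS r (hT hr)), Finset.sum_add_distrib,
      Finset.sum_boole, Finset.sum_boole, Finset.filter_mem_eq_inter, Finset.filter_mem_eq_inter]
    simp
  have hB : ∀ T ⊆ R, 1 + 3 * ((T ∩ X).card : ℤ) + 4 * (T ∩ Y).card ≤ pot G P Q T + 2 := by
    intro T hT
    have hd : Disjoint T S := Finset.disjoint_of_subset_left hT hRS
    have := hgood (T ∪ S) (Finset.union_subset (hT.trans Finset.sdiff_subset) hS)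
      ⟨g, by simp [hgS]⟩
    rw [pot_union G P Q hd, hcross T hT] at this
    push_cast at this
    omega
  have hdg' : ∀ T ⊆ R, dg G' T g = (T ∩ Y).card := by
    intro T hT
    unfold dg
    rw [← Finset.filter_mem_eq_inter]
    congr 1
    apply Finset.filter_congr
    intro u hu
    exact gad_adj_g
  have hes' : ∀ T ⊆ R, es G' T = es G T := fun T hT =>
    es_congr (fun v hv u hu => hadj v (hT hv) u (hT hu))
  have hmark : ∀ T ⊆ R, pot G P Q T ≤ pot G' (P ∪ insert g X) (Q ∪ insert g X) T
      + 3 * (T ∩ X).card := by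
    intro T hT
    have := pot_mark G P Q (insert g X) (insert g X) T
    have e1 : T ∩ insert g X = T ∩ X := by
      rw [Finset.inter_insert_of_notMem]; exact fun h => hgR (hT h)
    have e2 : pot G' (P ∪ insert g X) (Q ∪ insert g X) T
      = pot G (P ∪ insert g X) (Q ∪ insert g X) T := by
      unfold pot; rw [hes' T hT]
    rw [e1] at this
    rw [e2]
    linarith
  have hgood' : Good G' (P ∪ insert g X) (Q ∪ insert g X) (insert g R) := by
    intro T hT hne
    by_cases hgT : g ∈ T
    · have hTe : T.erase g ⊆ R := by
        intro x hx
        have := hT (Finset.mem_of_mem_erase hx)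
        exact (Finset.mem_insert.mp this).resolve_left (Finset.ne_of_mem_erase hx)
      have := pot_insert G' (P ∪ insert g X) (Q ∪ insert g X) (T := T.erase g) (v := g) (by simp)
      rw [Finset.insert_erase hgT, hdg' _ hTe] at this
      have a := wt_ge (P ∪ insert g X) (Q ∪ insert g X) g
      have b := hB _ hTe
      have c := hmark _ hTe
      linarith
    · have hTe : T ⊆ R := by
        intro x hx
        exact (Finset.mem_insert.mp (hT hx)).resolve_left (fun h => hgT (h ▸ hx))
      have := hA T hTe hne
      have := hmark T hTe
      linarith
  have hcardW : (insert g R).card < W.card := by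
    have : R.card + S.card = W.card := Finset.card_sdiff_add_card_eq_card hS
    rw [Finset.card_insert_of_notMem hgR]
    omega
  obtain ⟨A', hA'⟩ := ih G' _ _ _ hcardW hgood'
  have hgA' : g ∉ A' := fun h => hA'.dP g h (by simp)
  have hA'R : A' ⊆ R := by
    intro x hx
    exact (Finset.mem_insert.mp (hA'.sub hx)).resolve_left (fun h => hgA' (h ▸ hx))
  have hA'X : ∀ x ∈ A', x ∉ X := fun x hx hxX => hA'.dP x hx (by simp [hxX])
  have hA'Y : ∀ x ∈ A', x ∉ Y := fun x hx hxY =>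
    hA'.dQ g (by simp) (by simp) hgA' x hx (gad_adj_g.mpr hxY)
  have hno : ∀ u ∈ A', ∀ s ∈ S, ¬ G.Adj u s := by
    intro u hu s hs hus
    by_cases hsa : s ∈ AS
    · exact hA'X u hu (Finset.mem_filter.mpr ⟨hA'R hu, s, hsa, hus⟩)
    · exact hA'Y u hu (Finset.mem_filter.mpr ⟨hA'R hu, s, Finset.mem_sdiff.mpr ⟨hs, hsa⟩, hus⟩)
  have hRW : R ⊆ W := Finset.sdiff_subset
  have hSR : ∀ x ∈ W, x ∉ S → x ∈ R := fun x hx hs => Finset.mem_sdiff.mpr ⟨hx, hs⟩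
  refine ⟨AS ∪ A', ?_, ?_, ?_, ?_, ?_, ?_⟩
  · exact Finset.union_subset (hASS.trans hS) (hA'R.trans hRW)
  · intro v hv
    rcases Finset.mem_union.mp hv with h | h
    · exact hAS.dP v h
    · exact fun hp => hA'.dP v h (by simp [hp])
  · intro v hv hvQ hvA u hu huv
    rw [Finset.mem_union, not_or] at hvA
    by_cases hvS : v ∈ S
    · rcases Finset.mem_union.mp hu with h | h
      · exact hAS.dQ v hvS hvQ hvA.1 u h huv
      · exact hno u h v hvS huv.symm
    · rcases Finset.mem_union.mp hu with h | h
      · exact h2 v (hSR v hv hvS) hvQ u h huv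
      · exact hA'.dQ v (by simp [hSR v hv hvS]) (by simp [hvQ]) hvA.2 u h
          ((hadj _ (hSR v hv hvS) _ (hA'R h)).mpr huv)
  · intro u hu v hv huv
    rcases Finset.mem_union.mp hu with h | h <;> rcases Finset.mem_union.mp hv with h' | h'
    · exact hAS.ind u h v h' huv
    · exact hno v h' u (hASS h) huv.symm
    · exact hno u h v (hASS h') huv
    · exact hA'.ind u h v h' ((hadj _ (hA'R h) _ (hA'R h')).mpr huv)
  · intro c hc u hu v hv hcu hcv
    by_cases hcS : c ∈ S
    · rcases Finset.mem_union.mp hu with h | h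
      · rcases Finset.mem_union.mp hv with h' | h'
        · exact hAS.ind2 c hcS u h v h' hcu hcv
        · exact absurd hcv.symm (hno v h' c hcS)
      · exact absurd hcu.symm (hno u h c hcS)
    · have hcR := hSR c hc hcS
      have hcX : ∀ s ∈ AS, G.Adj c s → ∀ w ∈ A', G.Adj c w → False := by
        intro s hs hcs w hw hcw
        have hcX : c ∈ X := Finset.mem_filter.mpr ⟨hcR, s, hs, hcs⟩
        have hcA' : c ∉ A' := fun h => hA'X c h hcX
        exact hA'.dQ c (by simp [hcR]) (by simp [hcX]) hcA' w hw
          ((hadj _ hcR _ (hA'R hw)).mpr hcw)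
      rcases Finset.mem_union.mp hu with h | h <;> rcases Finset.mem_union.mp hv with h' | h'
      · exact dg_le_one_unique (h1 c hcR) (hASS h) (hASS h') hcu hcv
      · exact (hcX u h hcu v h' hcv).elim
      · exact (hcX v h' hcv u h hcu).elim
      · exact hA'.ind2 c (by simp [hcR]) u h v h' ((hadj _ hcR _ (hA'R h)).mpr hcu)
          ((hadj _ hcR _ (hA'R h')).mpr hcv)
  · intro T hT hcore
    by_contra hne
    have hce := core_es hcore
    set TR := T ∩ R with hTR
    set TS := T ∩ S with hTS
    have hTu : TR ∪ TS = T := by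
      rw [hTR, hTS, ← Finset.inter_union_distrib_left]
      apply Finset.inter_eq_left.mpr
      intro x hx
      by_cases hxS : x ∈ S
      · simp [hxS]
      · simp [hSR x (Finset.mem_sdiff.mp (hT hx)).1 hxS]
    have hTd : Disjoint TR TS := by
      apply Finset.disjoint_of_subset_left Finset.inter_subset_right
      exact Finset.disjoint_of_subset_right Finset.inter_subset_right hRS
    have hTnA : ∀ x ∈ T, x ∉ AS ∧ x ∉ A' := by
      intro x hx
      have := (Finset.mem_sdiff.mp (hT hx)).2
      simpa [not_or] using this
    have hTRs : TR ⊆ R := Finset.inter_subset_right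
    have hgTR : g ∉ TR := fun h => hgR (hTRs h)
    have hE' : es G' (insert g TR) + 2 ≤ 2 * (TR.card + 1) := by
      rw [← Finset.card_insert_of_notMem hgTR]
      apply hA'.fst.es_le _ _ ⟨g, by simp⟩
      intro x hx
      rcases Finset.mem_insert.mp hx with rfl | h
      · simp [hgA']
      · exact Finset.mem_sdiff.mpr ⟨by simp [hTRs h], (hTnA x (Finset.mem_inter.mp h).1).2⟩
    rw [es_insert G' hgTR, hdg' _ hTRs, hes' _ hTRs] at hE'
    have hcr : cross G TR TS ≤ (TR ∩ Y).card := by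
      have : (TR ∩ Y).card = ∑ r ∈ TR, if r ∈ Y then 1 else 0 := by
        rw [Finset.sum_boole, Finset.filter_mem_eq_inter]; simp
      rw [this]
      apply Finset.sum_le_sum
      intro r hr
      by_cases hrY : r ∈ Y
      · simp only [hrY, if_true]
        exact (dg_mono G Finset.inter_subset_right r).trans (h1 r (hTRs hr))
      · simp only [hrY, if_false]
        apply le_of_eq
        apply dg_eq_zero
        intro u hu hru
        exact hrY (Finset.mem_filter.mpr ⟨hTRs hr, u, Finset.mem_sdiff.mpr
          ⟨(Finset.mem_inter.mp hu).2, (hTnA u (Finset.mem_inter.mp hu).1).1⟩, hru⟩)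
    have hesT : es G T = es G TR + es G TS + 2 * cross G TR TS := by
      rw [← es_union G hTd, hTu]
    have hcT : T.card = TR.card + TS.card := by
      rw [← Finset.card_union_of_disjoint hTd, hTu]
    rcases TS.eq_empty_or_nonempty with h0 | h0
    · have hTT : T = TR := by rw [← hTu, h0]; simp
      have hf := hA'.fst.es_le TR (by
        intro x hx
        exact Finset.mem_sdiff.mpr ⟨by simp [hTRs hx], (hTnA x (Finset.mem_inter.mp hx).1).2⟩)
        (hTT ▸ Finset.nonempty_iff_ne_empty.mpr hne)
      rw [hes' _ hTRs, ← hTT] at hf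
      omega
    · have hf := hAS.fst.es_le TS (by
        intro x hx
        exact Finset.mem_sdiff.mpr ⟨(Finset.mem_inter.mp hx).2,
          (hTnA x (Finset.mem_inter.mp hx).1).1⟩) h0
      omega

lemma wt_le_of_mem_Q {P Q : Finset α} {v : α} (h : v ∈ Q) : wt P Q v ≤ 3 := by
  unfold wt; simp only [h, if_true]; split_ifs <;> norm_num

lemma Good.mono {G : SimpleGraph α} {P Q W S : Finset α} (h : Good G P Q W) (hS : S ⊆ W) :
    Good G P Q S := fun T hT => h T (hT.trans hS)

lemma inter_le_cross {G : SimpleGraph α} {T X S : Finset α} (hX : ∀ r ∈ X, ∃ s ∈ S, G.Adj r s) :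
    (T ∩ X).card ≤ cross G T S := by
  have : (T ∩ X).card = ∑ r ∈ T, if r ∈ X then 1 else 0 := by
    rw [Finset.sum_boole, Finset.filter_mem_eq_inter]; simp
  rw [this]
  apply Finset.sum_le_sum
  intro r _
  by_cases hr : r ∈ X
  · obtain ⟨s, hs, h⟩ := hX r hr
    simp only [hr, if_true]
    exact dg_pos hs h
  · simp [hr]

lemma gap1 {G : SimpleGraph α} {P Q W S : Finset α} (ih : IH α W.card)
    (hgood : Good G P Q W) (hnc : ¬ ∃ A, Col G P Q W A) (hS : S ⊆ W) (hSW : S ≠ W)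
    (hne : S.Nonempty) : 2 ≤ pot G P Q S := by
  by_contra! hlt
  apply hnc
  have hc : 2 ≤ S.card := by
    by_contra! h
    have h' : S.card = 1 := by have := Finset.card_pos.mpr hne; omega
    obtain ⟨v, rfl⟩ := Finset.card_eq_one.mp h'
    rw [pot_singleton] at hlt
    have := wt_ge P Q v
    omega
  have hcl : S.card < W.card := Finset.card_lt_card (hS.ssubset_of_ne hSW)
  obtain ⟨AS, hAS⟩ := ih G P Q S hcl (hgood.mono hS)
  have hins : ∀ r ∈ W \ S, 1 ≤ pot G P Q S + wt P Q r - 4 * dg G S r := by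
    intro r hr
    rw [Finset.mem_sdiff] at hr
    rw [← pot_insert G P Q hr.2]
    exact hgood _ (Finset.insert_subset hr.1 hS) ⟨r, by simp⟩
  refine gadget ih hgood hS hc (by omega) hAS ?_ ?_ ?_
  · intro r hr
    have := hins r hr
    have := wt_le P Q r
    omega
  · intro r hr hrQ s hs hrs
    have := hins r hr
    have := wt_le_of_mem_Q (P := P) hrQ
    have := dg_pos (hAS.sub hs) hrs
    omega
  · intro T hT hTne
    have hd : Disjoint T S := Finset.disjoint_of_subset_left hT Finset.sdiff_disjoint
    have h1 := hgood (T ∪ S) (Finset.union_subset (hT.trans Finset.sdiff_subset) hS)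
      (hTne.mono Finset.subset_union_left)
    rw [pot_union G P Q hd] at h1
    have h2 : (T ∩ (W \ S).filter (fun r => ∃ s ∈ AS, G.Adj r s)).card ≤ cross G T S := by
      apply inter_le_cross
      intro r hr
      obtain ⟨s, hs, h⟩ := (Finset.mem_filter.mp hr).2
      exact ⟨s, hAS.sub hs, h⟩
    have h3 := hgood T (hT.trans Finset.sdiff_subset) hTne
    omega

lemma gap2 {G : SimpleGraph α} {P Q W S : Finset α} (ih : IH α W.card)
    (hgood : Good G P Q W) (hnc : ¬ ∃ A, Col G P Q W A) (hS : S ⊆ W) (hSW : S ≠ W)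
    (hc : 2 ≤ S.card) : 3 ≤ pot G P Q S := by
  have hne : S.Nonempty := Finset.card_pos.mp (by omega)
  by_contra! hlt
  have hp2 : pot G P Q S = 2 := by
    have := gap1 ih hgood hnc hS hSW hne
    omega
  have hcl : S.card < W.card := Finset.card_lt_card (hS.ssubset_of_ne hSW)
  have hins : ∀ r ∈ W \ S, 1 ≤ pot G P Q S + wt P Q r - 4 * dg G S r := by
    intro r hr
    rw [Finset.mem_sdiff] at hr
    rw [← pot_insert G P Q hr.2]
    exact hgood _ (Finset.insert_subset hr.1 hS) ⟨r, by simp⟩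
  have hdeg : ∀ r ∈ W \ S, dg G S r ≤ 1 := by
    intro r hr
    have := hins r hr
    have := wt_le P Q r
    omega
  by_cases hb : ∃ r0 ∈ W \ S, ∃ s0 ∈ S, G.Adj r0 s0
  · obtain ⟨r0, hr0, s0, hs0, h0⟩ := hb
    have hgS : Good G (P ∪ {s0}) (Q ∪ ∅) S := by
      intro T hT hTne
      have h1 := pot_mark G P Q {s0} ∅ T
      have h2 := gap1 ih hgood hnc (hT.trans hS) (by
        rintro rfl; exact hSW (Finset.Subset.antisymm hS hT)) hTne
      have h3 : (T ∩ {s0}).card ≤ 1 := (Finset.card_le_card Finset.inter_subset_right).trans (by simp)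
      simp only [Finset.inter_empty, Finset.card_empty] at h1
      push_cast at h1
      omega
    rw [Finset.union_empty] at hgS
    obtain ⟨AS, hAS0⟩ := ih G _ _ S hcl hgS
    have hs0A : s0 ∉ AS := fun h => hAS0.dP s0 h (by simp)
    have hAS := hAS0.weaken (P := P) Finset.subset_union_left
    have hr0X : ∀ s ∈ AS, ¬ G.Adj r0 s := by
      intro s hs h
      exact hs0A (dg_le_one_unique (hdeg r0 hr0) hs0 (hAS.sub hs) h0 h ▸ hs)
    refine hnc (gadget ih hgood hS hc (by omega) hAS hdeg ?_ ?_)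
    · intro r hr hrQ s hs hrs
      have h1 := hins r hr
      have h2 := wt_le_of_mem_Q (P := P) hrQ
      have h3 := dg_pos (hAS.sub hs) hrs
      have hr' := Finset.mem_sdiff.mp hr
      have h4 : insert r S = W := by
        by_contra hW
        have := gap1 ih hgood hnc (Finset.insert_subset hr'.1 hS) hW ⟨r, by simp⟩
        rw [pot_insert G P Q hr'.2] at this
        omega
      have h5 : r0 = r := by
        have := Finset.mem_sdiff.mp hr0
        rw [← h4] at this
        exact (Finset.mem_insert.mp this.1).resolve_right this.2
      exact hr0X s hs (h5 ▸ hrs)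
    · intro T hT hTne
      set X := (W \ S).filter (fun r => ∃ s ∈ AS, G.Adj r s) with hX
      have hd : Disjoint T S := Finset.disjoint_of_subset_left hT Finset.sdiff_disjoint
      have hsub : T ∪ S ⊆ W := Finset.union_subset (hT.trans Finset.sdiff_subset) hS
      have hne' : (T ∪ S).Nonempty := hTne.mono Finset.subset_union_left
      have h1 := hgood (T ∪ S) hsub hne'
      rw [pot_union G P Q hd] at h1
      have h3 := hgood T (hT.trans Finset.sdiff_subset) hTne
      by_cases hTS : T ∪ S = W
      · have hr0T : r0 ∈ T := by
          have := Finset.mem_sdiff.mp hr0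
          rw [← hTS] at this
          exact (Finset.mem_union.mp this.1).resolve_right this.2
        have hr0nX : r0 ∉ X := by
          intro h
          obtain ⟨s, hs, h'⟩ := (Finset.mem_filter.mp h).2
          exact hr0X s hs h'
        have h2 : (T ∩ insert r0 X).card ≤ cross G T S := by
          apply inter_le_cross
          intro r hr
          rcases Finset.mem_insert.mp hr with rfl | hr
          · exact ⟨s0, hs0, h0⟩
          · obtain ⟨s, hs, h⟩ := (Finset.mem_filter.mp hr).2
            exact ⟨s, hAS.sub hs, h⟩
        rw [Finset.inter_insert_of_mem hr0T, Finset.card_insert_of_notMem (by simp [hr0nX])] at h2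
        omega
      · have h2 : (T ∩ X).card ≤ cross G T S := by
          apply inter_le_cross
          intro r hr
          obtain ⟨s, hs, h⟩ := (Finset.mem_filter.mp hr).2
          exact ⟨s, hAS.sub hs, h⟩
        have h4 := gap1 ih hgood hnc hsub hTS hne'
        rw [pot_union G P Q hd] at h4
        omega
  · push Not at hb
    obtain ⟨AS, hAS⟩ := ih G P Q S hcl (hgood.mono hS)
    refine hnc (gadget ih hgood hS hc (by omega) hAS hdeg ?_ ?_)
    · intro r hr _ s hs
      exact hb r hr s (hAS.sub hs)
    · intro T hT hTne
      have : (W \ S).filter (fun r => ∃ s ∈ AS, G.Adj r s) = ∅ := by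
        rw [Finset.filter_eq_empty_iff]
        rintro r hr ⟨s, hs, h⟩
        exact hb r hr s (hAS.sub hs) h
      rw [this]
      have := hgood T (hT.trans Finset.sdiff_subset) hTne
      simpa using this

/-- a minimal counterexample -/
structure MinC (G : SimpleGraph α) (P Q W : Finset α) : Prop where
  ih : IH α W.card
  good : Good G P Q W
  nc : ¬ ∃ A, Col G P Q W A

/-- unmarked vertices of degree two -/
def U2 (G : SimpleGraph α) (P Q W : Finset α) (v : α) : Prop :=
  v ∈ W ∧ v ∉ P ∧ v ∉ Q ∧ dg G W v = 2

lemma Forest.insert {G : SimpleGraph α} {B : Finset α} {v : α} (h : Forest G B)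
    (hd : dg G B v ≤ 1) : Forest G (insert v B) := by
  intro T hT hcore
  by_cases hv : v ∈ T
  · exfalso
    have h1 := hcore v hv
    have h2 : T.filter (fun u => G.Adj v u) ⊆ B.filter (fun u => G.Adj v u) := by
      intro u hu
      rw [Finset.mem_filter] at hu ⊢
      exact ⟨(Finset.mem_insert.mp (hT hu.1)).resolve_left (fun e => hu.2.ne e.symm), hu.2⟩
    have h3 := Finset.card_le_card h2
    unfold dg at h1 hd
    omega
  · apply h T _ hcore
    intro u hu
    exact (Finset.mem_insert.mp (hT hu)).resolve_left (fun e => hv (e ▸ hu))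

lemma dg_le_one {G : SimpleGraph α} {T : Finset α} {v w : α} (h : ∀ u ∈ T, G.Adj v u → u = w) :
    dg G T v ≤ 1 := by
  unfold dg
  rw [Finset.card_le_one]
  intro a ha b hb
  rw [Finset.mem_filter] at ha hb
  rw [h a ha.1 ha.2, h b hb.1 hb.2]

lemma two_nbrs {G : SimpleGraph α} {T : Finset α} {v a b u : α} (hd : dg G T v = 2) (hab : a ≠ b)
    (ha : a ∈ T) (hb : b ∈ T) (hu : u ∈ T) (h1 : G.Adj v a) (h2 : G.Adj v b) (h3 : G.Adj v u) :
    u = a ∨ u = b := by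
  by_contra! h
  have : ({u, a, b} : Finset α) ⊆ T.filter (fun u => G.Adj v u) := by
    intro x hx
    simp only [Finset.mem_insert, Finset.mem_singleton] at hx
    rcases hx with rfl | rfl | rfl <;> simp [*]
  have := Finset.card_le_card this
  rw [Finset.card_insert_of_notMem (by simp [h.1, h.2]), Finset.card_pair hab] at this
  unfold dg at hd
  omega

lemma other_nbr {G : SimpleGraph α} {T : Finset α} {v : α} (hd : 2 ≤ dg G T v) (a : α) :
    ∃ x ∈ T, G.Adj v x ∧ x ≠ a := by
  by_contra! h
  have := dg_le_one (G := G) (T := T) (v := v) (w := a) h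
  omega

lemma MinC.gap1 {G : SimpleGraph α} {P Q W : Finset α} (m : MinC G P Q W) {T : Finset α} {v : α}
    (hT : T ⊆ W) (hv : v ∈ W) (hvT : v ∉ T) (hne : T.Nonempty) : 2 ≤ pot G P Q T :=
  IFP.gap1 m.ih m.good m.nc hT (fun h => hvT (h ▸ hv)) hne

lemma MinC.gap2 {G : SimpleGraph α} {P Q W : Finset α} (m : MinC G P Q W) {T : Finset α} {v : α}
    (hT : T ⊆ W) (hv : v ∈ W) (hvT : v ∉ T) (hne : 2 ≤ T.card) : 3 ≤ pot G P Q T :=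
  IFP.gap2 m.ih m.good m.nc hT (fun h => hvT (h ▸ hv)) hne

lemma MinC.mindeg {G : SimpleGraph α} {P Q W : Finset α} (m : MinC G P Q W) {v : α}
    (hv : v ∈ W) : 2 ≤ dg G W v := by
  by_contra! hd
  apply m.nc
  have hcl : (W.erase v).card < W.card := Finset.card_erase_lt_of_mem hv
  set N := W.filter (fun u => G.Adj v u) with hN
  have hg : Good G (P ∪ N) (Q ∪ ∅) (W.erase v) := by
    intro T hT hTne
    have h1 := pot_mark G P Q N ∅ T
    have h2 := m.gap1 (hT.trans (Finset.erase_subset _ _)) hv (fun h => by simpa using hT h) hTne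
    have h3 : (T ∩ N).card ≤ dg G W v := Finset.card_le_card Finset.inter_subset_right
    simp only [Finset.inter_empty, Finset.card_empty] at h1
    push_cast at h1
    omega
  rw [Finset.union_empty] at hg
  obtain ⟨A, hA⟩ := m.ih G _ _ _ hcl hg
  have hvA : v ∉ A := fun h => by simpa using hA.sub h
  have hNA : ∀ u ∈ A, ¬ G.Adj v u := by
    intro u hu h
    exact hA.dP u hu (Finset.mem_union_right _
      (Finset.mem_filter.mpr ⟨Finset.mem_of_mem_erase (hA.sub hu), h⟩))
  refine ⟨A, hA.sub.trans (Finset.erase_subset _ _), (hA.weaken Finset.subset_union_left).dP,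
    ?_, hA.ind, ?_, ?_⟩
  · intro x hx hxQ hxA u hu
    by_cases hxv : x = v
    · subst hxv; exact hNA u hu
    · exact hA.dQ x (by simp [hx, hxv]) hxQ hxA u hu
  · intro c hc u hu w hw hcu hcw
    by_cases hxv : c = v
    · subst hxv; exact absurd hcu (hNA u hu)
    · exact hA.ind2 c (by simp [hc, hxv]) u hu w hw hcu hcw
  · have e : W \ A = insert v (W.erase v \ A) := by
      ext x
      by_cases hxv : x = v
      · subst hxv; simp [hv, hvA]
      · simp [hxv]
    rw [e]
    apply hA.fst.insert
    exact (dg_mono G (Finset.sdiff_subset.trans (Finset.erase_subset _ _)) v).trans (by omega)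

lemma MinC.redT {G : SimpleGraph α} {P Q W : Finset α} (m : MinC G P Q W) {v a b : α}
    (hv : v ∈ W) (hvQ : v ∉ Q) (ha : U2 G P Q W a) (hb : U2 G P Q W b) (hva : G.Adj a v)
    (hab : G.Adj a b) (hbv : b ≠ v) : False := by
  apply m.nc
  obtain ⟨haW, haP, haQ, had⟩ := ha
  obtain ⟨hbW, hbP, hbQ, hbd⟩ := hb
  have hav : a ≠ v := hva.ne
  have habne : a ≠ b := hab.ne
  set W' := (W.erase a).erase b with hW'
  have hW'W : W' ⊆ W := (Finset.erase_subset _ _).trans (Finset.erase_subset _ _)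
  have haW' : a ∉ W' := by simp [hW']
  have hbW' : b ∉ W' := by simp [hW']
  have hmemW' : ∀ x ∈ W, x ≠ a → x ≠ b → x ∈ W' := by
    intro x hx h1 h2; simp [hW', hx, h1, h2]
  have hcl : W'.card < W.card := Finset.card_lt_card (hW'W.ssubset_of_ne (fun h => haW' (h ▸ haW)))
  have hg : Good G (P ∪ ∅) (Q ∪ {v}) W' := by
    intro T hT hTne
    have h1 := pot_mark G P Q ∅ {v} T
    simp only [Finset.inter_empty, Finset.card_empty] at h1
    by_cases hvT : v ∈ T
    · rw [Finset.inter_singleton_of_mem hvT, Finset.card_singleton] at h1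
      by_cases hc : 2 ≤ T.card
      · have := m.gap2 (hT.trans hW'W) haW (fun h => haW' (hT h)) hc
        push_cast at h1
        omega
      · have h' : T.card = 1 := by have := Finset.card_pos.mpr hTne; omega
        obtain ⟨w, rfl⟩ := Finset.card_eq_one.mp h'
        rw [pot_singleton]
        have := wt_ge (P ∪ ∅) (Q ∪ {v}) w
        omega
    · rw [Finset.inter_singleton_of_notMem hvT] at h1
      have := m.good T (hT.trans hW'W) hTne
      simp only [Finset.card_empty] at h1
      push_cast at h1
      omega
  rw [Finset.union_empty] at hg
  obtain ⟨A, hA⟩ := m.ih G _ _ _ hcl hg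
  have haA : a ∉ A := fun h => haW' (hA.sub h)
  have hbA : b ∉ A := fun h => hbW' (hA.sub h)
  obtain ⟨x, hxW, hbx, hxa⟩ := other_nbr (G := G) (T := W) (v := b) (by omega) a
  have hxb : x ≠ b := hbx.ne'
  have hna : ∀ u ∈ W, G.Adj a u → u = v ∨ u = b := fun u hu h =>
    two_nbrs had hbv.symm hv hbW hu hva hab h
  have hnb : ∀ u ∈ W, G.Adj b u → u = x ∨ u = a := fun u hu h =>
    two_nbrs hbd hxa hxW haW hu hbx hab.symm h
  have hAW := hA.sub.trans hW'W
  by_cases hcase : v ∈ A ∨ x ∈ A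
  · refine ⟨A, hAW, hA.dP, ?_, hA.ind, ?_, ?_⟩
    · intro c hc hcQ hcA u hu
      exact hA.dQ c (hmemW' c hc (fun h => haQ (h ▸ hcQ)) (fun h => hbQ (h ▸ hcQ)))
        (by simp [hcQ]) hcA u hu
    · intro c hc u hu w hw hcu hcw
      by_cases hca : c = a
      · subst hca
        have e1 := (hna u (hAW hu) hcu).resolve_right (fun h => hbA (h ▸ hu))
        have e2 := (hna w (hAW hw) hcw).resolve_right (fun h => hbA (h ▸ hw))
        rw [e1, e2]
      · by_cases hcb : c = b
        · subst hcb
          have e1 := (hnb u (hAW hu) hcu).resolve_right (fun h => haA (h ▸ hu))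
          have e2 := (hnb w (hAW hw) hcw).resolve_right (fun h => haA (h ▸ hw))
          rw [e1, e2]
        · exact hA.ind2 c (hmemW' c hc hca hcb) u hu w hw hcu hcw
    · rcases hcase with hvA | hxA
      · have e : W \ A ⊆ insert a (insert b (W' \ A)) := by
          intro y hy
          have hy' := Finset.mem_sdiff.mp hy
          by_cases h1 : y = a
          · simp [h1]
          · by_cases h2 : y = b
            · simp [h2]
            · simp [hmemW' y hy'.1 h1 h2, hy'.2]
        refine Forest.mono (Forest.insert (Forest.insert hA.fst ?_) ?_) e
        · apply dg_le_one (w := x)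
          intro u hu h
          have hu' := Finset.mem_sdiff.mp hu
          exact (hnb u (hW'W hu'.1) h).resolve_right (fun h => haW' (h ▸ hu'.1))
        · apply dg_le_one (w := b)
          intro u hu h
          rcases Finset.mem_insert.mp hu with h1 | h1
          · exact h1
          · have hu' := Finset.mem_sdiff.mp h1
            exact (hna u (hW'W hu'.1) h).resolve_left (fun h => hu'.2 (h ▸ hvA))
      · have e : W \ A ⊆ insert b (insert a (W' \ A)) := by
          intro y hy
          have hy' := Finset.mem_sdiff.mp hy
          by_cases h1 : y = a
          · simp [h1]
          · by_cases h2 : y = b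
            · simp [h2]
            · simp [hmemW' y hy'.1 h1 h2, hy'.2]
        refine Forest.mono (Forest.insert (Forest.insert hA.fst ?_) ?_) e
        · apply dg_le_one (w := v)
          intro u hu h
          have hu' := Finset.mem_sdiff.mp hu
          exact (hna u (hW'W hu'.1) h).resolve_right (fun h => hbW' (h ▸ hu'.1))
        · apply dg_le_one (w := a)
          intro u hu h
          rcases Finset.mem_insert.mp hu with h1 | h1
          · exact h1
          · have hu' := Finset.mem_sdiff.mp h1
            exact (hnb u (hW'W hu'.1) h).resolve_left (fun h => hu'.2 (h ▸ hxA))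
  · push Not at hcase
    obtain ⟨hvA, hxA⟩ := hcase
    have hnaA : ∀ u ∈ A, ¬ G.Adj a u := by
      intro u hu h
      rcases hna u (hAW hu) h with rfl | rfl
      · exact hvA hu
      · exact hbA hu
    have hnbA : ∀ u ∈ A, ¬ G.Adj b u := by
      intro u hu h
      rcases hnb u (hAW hu) h with rfl | rfl
      · exact hxA hu
      · exact haA hu
    have hmix : ∀ c ∈ W, ∀ w ∈ A, G.Adj c a → G.Adj c w → False := by
      intro c hc w hw hca hcw
      rcases hna c hc hca.symm with rfl | rfl
      · exact hA.dQ c (hmemW' c hc hav.symm hbv.symm) (by simp) hvA w hw hcw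
      · exact hnbA w hw hcw
    refine ⟨insert a A, ?_, ?_, ?_, ?_, ?_, ?_⟩
    · exact Finset.insert_subset haW hAW
    · intro u hu
      rcases Finset.mem_insert.mp hu with rfl | hu
      · exact haP
      · exact hA.dP u hu
    · intro c hc hcQ hcA u hu hcu
      rw [Finset.mem_insert, not_or] at hcA
      rcases Finset.mem_insert.mp hu with rfl | hu
      · rcases hna c hc hcu.symm with rfl | rfl
        · exact hvQ hcQ
        · exact hbQ hcQ
      · exact hA.dQ c (hmemW' c hc hcA.1 (fun h => hbQ (h ▸ hcQ)))
          (by simp [hcQ]) hcA.2 u hu hcu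
    · intro u hu w hw huw
      rcases Finset.mem_insert.mp hu with h1 | h1 <;> rcases Finset.mem_insert.mp hw with h2 | h2
      · exact huw.ne (h1.trans h2.symm)
      · exact hnaA w h2 (h1 ▸ huw)
      · exact hnaA u h1 (h2 ▸ huw.symm)
      · exact hA.ind u h1 w h2 huw
    · intro c hc u hu w hw hcu hcw
      rcases Finset.mem_insert.mp hu with h1 | h1 <;> rcases Finset.mem_insert.mp hw with h2 | h2
      · exact h1.trans h2.symm
      · exact (hmix c hc w h2 (h1 ▸ hcu) hcw).elim
      · exact (hmix c hc u h1 (h2 ▸ hcw) hcu).elim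
      · by_cases hca : c = a
        · subst hca; exact absurd hcu (hnaA u h1)
        · by_cases hcb : c = b
          · subst hcb; exact absurd hcu (hnbA u h1)
          · exact hA.ind2 c (hmemW' c hc hca hcb) u h1 w h2 hcu hcw
    · have e : W \ insert a A ⊆ insert b (W' \ A) := by
        intro y hy
        have hy' := Finset.mem_sdiff.mp hy
        rw [Finset.mem_insert, not_or] at hy'
        by_cases h2 : y = b
        · simp [h2]
        · simp [hmemW' y hy'.1 hy'.2.1 h2, hy'.2.2]
      refine Forest.mono (Forest.insert hA.fst ?_) e
      apply dg_le_one (w := x)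
      intro u hu h
      have hu' := Finset.mem_sdiff.mp hu
      exact (hnb u (hW'W hu'.1) h).resolve_right (fun h => haW' (h ▸ hu'.1))

lemma MinC.redL {G : SimpleGraph α} {P Q W : Finset α} (m : MinC G P Q W) {v : α}
    (hv : v ∈ W) (hvP : v ∉ P) (hN0 : ∀ a ∈ W, G.Adj v a → U2 G P Q W a) : False := by
  apply m.nc
  set N := W.filter (fun u => G.Adj v u) with hN
  have hNm : ∀ a, a ∈ N ↔ a ∈ W ∧ G.Adj v a := by intro a; simp [hN]
  set W' := W \ insert v N with hW'
  have hW'm : ∀ x, x ∈ W' ↔ x ∈ W ∧ x ≠ v ∧ x ∉ N := by intro x; simp [hW', not_or]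
  have hW'W : W' ⊆ W := Finset.sdiff_subset
  have hvW' : v ∉ W' := fun h => ((hW'm v).mp h).2.1 rfl
  have hvN : v ∉ N := fun h => ((hNm v).mp h).2.ne rfl
  have hcl : W'.card < W.card :=
    Finset.card_lt_card (hW'W.ssubset_of_ne (fun h => hvW' (h ▸ hv)))
  set Ends := W'.filter (fun y => ∃ a ∈ N, G.Adj y a) with hEnds
  have hEm : ∀ y, y ∈ Ends ↔ y ∈ W' ∧ ∃ a ∈ N, G.Adj y a := by intro y; simp [hEnds]
  set E := Ends.filter (fun y => ¬ U2 G P Q W y) with hE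
  have hEm' : ∀ y, y ∈ E ↔ y ∈ Ends ∧ ¬ U2 G P Q W y := by intro y; simp [hE]
  have hone : ∀ a ∈ N, ∀ y ∈ W', ∀ z ∈ W', G.Adj a y → G.Adj a z → z = y := by
    intro a ha y hy z hz hay haz
    have ha' := (hNm a).mp ha
    have hU := hN0 a ha'.1 ha'.2
    exact (two_nbrs hU.2.2.2 (a := y) (b := v) ((hW'm y).mp hy).2.1 (hW'W hy) hv (hW'W hz)
      hay ha'.2.symm haz).resolve_right ((hW'm z).mp hz).2.1
  have hg : Good G (P ∪ E) (Q ∪ ∅) W' := by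
    intro T hT hTne
    have h1 := pot_mark G P Q E ∅ T
    simp only [Finset.inter_empty, Finset.card_empty] at h1
    have hvT : v ∉ T := fun h => hvW' (hT h)
    have hTW := hT.trans hW'W
    have hcT : (T ∩ E).card ≤ T.card := Finset.card_le_card Finset.inter_subset_left
    have g1 := m.gap1 hTW hv hvT hTne
    by_cases hc1 : (T ∩ E).card ≤ 1
    · push_cast at h1; omega
    have g2 := m.gap2 hTW hv hvT (by omega)
    by_cases hc2 : (T ∩ E).card ≤ 2
    · push_cast at h1; omega
    set Q0 := N.filter (fun a => ∃ t ∈ T, G.Adj a t) with hQ0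
    have hQ0N : Q0 ⊆ N := Finset.filter_subset _ _
    have hcardQ : (T ∩ E).card ≤ Q0.card := by
      have hch : ∀ y ∈ T ∩ E, ∃ a ∈ Q0, G.Adj a y := by
        intro y hy
        rw [Finset.mem_inter] at hy
        obtain ⟨a, ha, hya⟩ := ((hEm y).mp ((hEm' y).mp hy.2).1).2
        exact ⟨a, Finset.mem_filter.mpr ⟨ha, y, hy.1, hya.symm⟩, hya.symm⟩
      choose! f hf1 hf2 using hch
      apply Finset.card_le_card_of_injOn f hf1
      intro y hy z hz hyz
      have hy' := hf2 y hy
      have hz' := hf2 z hz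
      rw [← hyz] at hz'
      exact (hone _ (hQ0N (hf1 y hy)) z (hT (Finset.mem_inter.mp hz).1) y
        (hT (Finset.mem_inter.mp hy).1) hz' hy')
    have hvQ0 : v ∉ Q0 := fun h => hvN (hQ0N h)
    have hdisj : Disjoint (insert v Q0) T := by
      rw [Finset.disjoint_left]
      intro x hx hxT
      have hx' := (hW'm x).mp (hT hxT)
      rcases Finset.mem_insert.mp hx with h | h
      · exact hx'.2.1 h
      · exact hx'.2.2 (hQ0N h)
    have hcr : Q0.card ≤ cross G (insert v Q0) T := by
      unfold cross
      rw [Finset.sum_insert hvQ0]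
      have : ∑ a ∈ Q0, 1 ≤ ∑ a ∈ Q0, dg G T a := by
        apply Finset.sum_le_sum
        intro a ha
        obtain ⟨t, ht, h⟩ := (Finset.mem_filter.mp ha).2
        exact dg_pos ht h
      simp only [Finset.sum_const, smul_eq_mul, mul_one] at this
      omega
    have hQW : Q0 ⊆ W := hQ0N.trans (Finset.filter_subset _ _)
    have hpos := m.good (insert v Q0 ∪ T) (Finset.union_subset
      (Finset.insert_subset hv hQW) hTW) ⟨v, by simp⟩
    have hdv : dg G Q0 v = Q0.card := by
      unfold dg
      congr 1
      apply Finset.filter_true_of_mem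
      intro a ha
      exact ((hNm a).mp (hQ0N ha)).2
    have hpQ : pot G P Q Q0 ≤ 5 * Q0.card := by
      unfold pot
      have : ∑ a ∈ Q0, wt P Q a ≤ ∑ a ∈ Q0, 5 := Finset.sum_le_sum (fun a _ => wt_le P Q a)
      simp only [Finset.sum_const, nsmul_eq_mul] at this
      linarith [Int.natCast_nonneg (es G Q0)]
    rw [pot_union G P Q hdisj, pot_insert G P Q hvQ0, hdv] at hpos
    have := wt_le P Q v
    push_cast at h1
    omega
  rw [Finset.union_empty] at hg
  obtain ⟨A, hA⟩ := m.ih G _ _ _ hcl hg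
  have hAW := hA.sub.trans hW'W
  have hvA : ∀ u ∈ A, ¬ G.Adj v u := by
    intro u hu h
    exact ((hW'm u).mp (hA.sub hu)).2.2 ((hNm u).mpr ⟨hAW hu, h⟩)
  have hAE : ∀ u ∈ A, u ∈ Ends → U2 G P Q W u := by
    intro u hu huE
    by_contra h
    exact hA.dP u hu (Finset.mem_union_right _ ((hEm' u).mpr ⟨huE, h⟩))
  refine ⟨insert v (A \ Ends), ?_, ?_, ?_, ?_, ?_, ?_⟩
  · exact Finset.insert_subset hv (Finset.sdiff_subset.trans hAW)
  · intro u hu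
    rcases Finset.mem_insert.mp hu with rfl | hu
    · exact hvP
    · exact fun h => hA.dP u (Finset.mem_sdiff.mp hu).1 (Finset.mem_union_left _ h)
  · intro c hc hcQ hcA u hu hcu
    rw [Finset.mem_insert, not_or] at hcA
    have hcN : c ∉ N := by
      intro h
      have h' := (hNm c).mp h
      exact (hN0 c h'.1 h'.2).2.2.1 hcQ
    have hcW' : c ∈ W' := (hW'm c).mpr ⟨hc, hcA.1, hcN⟩
    rcases Finset.mem_insert.mp hu with rfl | hu
    · exact hcN ((hNm c).mpr ⟨hc, hcu.symm⟩)
    · have hu' := Finset.mem_sdiff.mp hu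
      by_cases hcA' : c ∈ A
      · have hcE : c ∈ Ends := by
          by_contra h
          exact hcA.2 (Finset.mem_sdiff.mpr ⟨hcA', h⟩)
        exact (hAE c hcA' hcE).2.2.1 hcQ
      · exact hA.dQ c hcW' hcQ hcA' u hu'.1 hcu
  · intro u hu w hw huw
    rcases Finset.mem_insert.mp hu with h1 | h1 <;> rcases Finset.mem_insert.mp hw with h2 | h2
    · exact huw.ne (h1.trans h2.symm)
    · exact hvA w (Finset.mem_sdiff.mp h2).1 (h1 ▸ huw)
    · exact hvA u (Finset.mem_sdiff.mp h1).1 (h2 ▸ huw.symm)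
    · exact hA.ind u (Finset.mem_sdiff.mp h1).1 w (Finset.mem_sdiff.mp h2).1 huw
  · have hNno : ∀ c ∈ N, ∀ w ∈ A \ Ends, ¬ G.Adj c w := by
      intro c hc w hw hcw
      have hw' := Finset.mem_sdiff.mp hw
      exact hw'.2 ((hEm w).mpr ⟨hA.sub hw'.1, c, hc, hcw.symm⟩)
    intro c hc u hu w hw hcu hcw
    rcases Finset.mem_insert.mp hu with h1 | h1 <;> rcases Finset.mem_insert.mp hw with h2 | h2
    · exact h1.trans h2.symm
    · exact absurd hcw (hNno c ((hNm c).mpr ⟨hc, (h1 ▸ hcu).symm⟩) w h2)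
    · exact absurd hcu (hNno c ((hNm c).mpr ⟨hc, (h2 ▸ hcw).symm⟩) u h1)
    · by_cases hcv : c = v
      · subst hcv; exact absurd hcu (hvA u (Finset.mem_sdiff.mp h1).1)
      · by_cases hcN : c ∈ N
        · exact absurd hcu (hNno c hcN u h1)
        · exact hA.ind2 c ((hW'm c).mpr ⟨hc, hcv, hcN⟩) u (Finset.mem_sdiff.mp h1).1 w
            (Finset.mem_sdiff.mp h2).1 hcu hcw
  · intro T hT hcore
    have hTm : ∀ x ∈ T, x ∈ W ∧ x ≠ v ∧ (x ∈ A → x ∈ Ends) := by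
      intro x hx
      have h := Finset.mem_sdiff.mp (hT hx)
      rw [Finset.mem_insert, not_or, Finset.mem_sdiff, not_and, not_not] at h
      exact ⟨h.1, h.2.1, h.2.2⟩
    have hTW : T ⊆ W := fun x hx => (hTm x hx).1
    -- a `U2` vertex with a neighbour outside `T` is not in `T`
    have key : ∀ x ∈ T, U2 G P Q W x → ∀ y ∈ W, G.Adj x y → y ∈ T := by
      intro x hx hU y hy hxy
      by_contra hyT
      have h1 := hcore x hx
      have h2 : insert y (T.filter (fun u => G.Adj x u)) ⊆ W.filter (fun u => G.Adj x u) := by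
        apply Finset.insert_subset
        · simp [hy, hxy]
        · exact Finset.filter_subset_filter _ hTW
      have h3 := Finset.card_le_card h2
      rw [Finset.card_insert_of_notMem (by simp [hyT])] at h3
      have h4 := hU.2.2.2
      unfold dg at h1 h4
      omega
    have hTN : ∀ x ∈ T, x ∉ N := by
      intro x hx hxN
      have h := (hNm x).mp hxN
      exact (hTm v (key x hx (hN0 x h.1 h.2) v hv h.2.symm)).2.1 rfl
    refine hA.fst T ?_ hcore
    intro x hx
    have h := hTm x hx
    refine Finset.mem_sdiff.mpr ⟨(hW'm x).mpr ⟨h.1, h.2.1, hTN x hx⟩, ?_⟩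
    intro hxA
    have hxE := h.2.2 hxA
    obtain ⟨a, ha, hxa⟩ := ((hEm x).mp hxE).2
    exact hTN a (key x hx (hAE x hxA hxE) a ((hNm a).mp ha).1 hxa) ha

lemma MinC.redR {G : SimpleGraph α} {P Q W : Finset α} (m : MinC G P Q W) {f a : α}
    (hf : f ∈ W) (hfP : f ∈ P) (hfQ : f ∉ Q) (hfd : dg G W f = 2)
    (ha : U2 G P Q W a) (hfa : G.Adj f a) : False := by
  obtain ⟨haW, haP, haQ, had⟩ := ha
  obtain ⟨y, hyW, hfy, hya⟩ := other_nbr (G := G) (T := W) (v := f) (by omega) a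
  obtain ⟨x, hxW, hax, hxf⟩ := other_nbr (G := G) (T := W) (v := a) (by omega) f
  have hwf : wt P Q f = 4 := by simp [wt, hfP, hfQ]
  have hfane := hfa.ne
  have hfyne := hfy.ne
  have hnf : ∀ u ∈ W, G.Adj f u → u = a ∨ u = y := fun u hu h =>
    two_nbrs hfd hya.symm haW hyW hu hfa hfy h
  have hna : ∀ u ∈ W, G.Adj a u → u = f ∨ u = x := fun u hu h =>
    two_nbrs had hxf.symm hf hxW hu hfa.symm hax h
  by_cases hxy : x = y
  · subst hxy
    have hpot : pot G P Q (insert f (insert a {x})) ≤ wt P Q x - 3 := by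
      rw [pot_insert G P Q (by simp [hfane, hfyne]), pot_insert G P Q (by simp [hya.symm]),
        pot_singleton, hwf]
      have h1 := dg_pos (T := {x}) (Finset.mem_singleton_self x) hax
      have h2 := dg_two (T := insert a {x}) hya.symm (by simp) (by simp) hfa hfy
      have := wt_le P Q a
      omega
    have hsub : insert f (insert a {x}) ⊆ W := by
      intro z hz
      simp only [Finset.mem_insert, Finset.mem_singleton] at hz
      rcases hz with rfl | rfl | rfl <;> assumption
    have hcard : 2 ≤ (insert f (insert a ({x} : Finset α))).card := by
      rw [Finset.card_insert_of_notMem (by simp [hfane, hfyne])]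
      have : 0 < (insert a ({x} : Finset α)).card := Finset.card_pos.mpr ⟨a, by simp⟩
      omega
    have hWeq : insert f (insert a {x}) = W := by
      by_contra h
      have := IFP.gap2 m.ih m.good m.nc hsub h hcard
      have := wt_le P Q x
      omega
    have hxQ : x ∉ Q := by
      intro h
      have h1 := m.good _ hsub ⟨f, by simp⟩
      have := wt_le_of_mem_Q (P := P) h
      omega
    apply m.nc
    refine ⟨{a}, by simpa using haW, by simpa using haP, ?_, ?_, ?_, ?_⟩
    · intro c hc hcQ
      rw [← hWeq] at hc
      simp only [Finset.mem_insert, Finset.mem_singleton] at hc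
      rcases hc with rfl | rfl | rfl <;> contradiction
    · intro u hu w hw h
      rw [Finset.mem_singleton] at hu hw
      exact h.ne (hu.trans hw.symm)
    · intro c _ u hu w hw _ _
      rw [Finset.mem_singleton] at hu hw
      exact hu.trans hw.symm
    · have h0 : Forest G (∅ : Finset α) := fun T hT _ => Finset.subset_empty.mp hT
      have h1 : Forest G (insert f (insert x ∅)) := by
        apply Forest.insert (Forest.insert h0 (by simp [dg]))
        exact dg_singleton_le G x f
      apply h1.mono
      rw [← hWeq]
      intro z hz
      simp only [Finset.mem_sdiff, Finset.mem_insert, Finset.mem_singleton] at hz ⊢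
      tauto
  · have hnay : ¬ G.Adj a y := by
      intro h
      rcases hna y hyW h with h | h
      · exact hfyne h.symm
      · exact hxy h.symm
    obtain ⟨G', hG'⟩ : ∃ G' : SimpleGraph α, G' = G ⊔ SimpleGraph.edge a y := ⟨_, rfl⟩
    have hadj : ∀ u w, G'.Adj u w ↔ G.Adj u w ∨ (u = a ∧ w = y) ∨ (u = y ∧ w = a) := by
      intro u w
      rw [hG', SimpleGraph.sup_adj, SimpleGraph.edge_adj]
      constructor
      · rintro (h | ⟨h, _⟩)
        · exact Or.inl h
        · right; tauto
      · rintro (h | h)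
        · exact Or.inl h
        · right
          refine ⟨by tauto, ?_⟩
          rcases h with ⟨rfl, rfl⟩ | ⟨rfl, rfl⟩
          · exact hya.symm
          · exact hya
    have hle : ∀ u w, G.Adj u w → G'.Adj u w := fun u w h => (hadj u w).mpr (Or.inl h)
    have hg : Good G' P Q (W.erase f) := by
      intro T hT hTne
      have hTW := hT.trans (Finset.erase_subset f W)
      have hfT : f ∉ T := fun h => by simpa using hT h
      by_cases hb : a ∈ T ∧ y ∈ T
      · have h1 := m.good (insert f T) (Finset.insert_subset hf hTW) ⟨f, by simp⟩
        rw [pot_insert G P Q hfT, hwf] at h1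
        have h2 := dg_two hya.symm hb.1 hb.2 hfa hfy
        have h3 : es G' T ≤ es G T + 2 := by
          have e1 := es_insert G' (T := T.erase a) (v := a) (by simp)
          have e2 := es_insert G (T := T.erase a) (v := a) (by simp)
          rw [Finset.insert_erase hb.1] at e1 e2
          have e3 : es G' (T.erase a) = es G (T.erase a) := by
            apply es_congr
            intro u hu w hw
            rw [hadj]
            have := Finset.ne_of_mem_erase hu
            have := Finset.ne_of_mem_erase hw
            tauto
          have e4 : dg G' (T.erase a) a ≤ dg G (T.erase a) a + 1 := by
            unfold dg
            refine (Finset.card_le_card (t := insert y ((T.erase a).filter (fun u => G.Adj a u)))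
              ?_).trans (Finset.card_insert_le _ _)
            intro u hu
            rw [Finset.mem_filter, hadj] at hu
            rw [Finset.mem_insert, Finset.mem_filter]
            rcases hu.2 with h | h | h
            · exact Or.inr ⟨hu.1, h⟩
            · exact Or.inl h.2
            · exact absurd h.1.symm hya
          omega
        unfold pot at h1 ⊢
        have h3' : (es G' T : ℤ) ≤ es G T + 2 := by exact_mod_cast h3
        omega
      · have e3 : es G' T = es G T := by
          apply es_congr
          intro u hu w hw
          rw [hadj]
          constructor
          · rintro (h | ⟨rfl, rfl⟩ | ⟨rfl, rfl⟩)
            · exact h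
            · exact absurd ⟨hu, hw⟩ hb
            · exact absurd ⟨hw, hu⟩ hb
          · exact Or.inl
        unfold pot
        rw [e3]
        exact m.good T hTW hTne
    obtain ⟨A, hA⟩ := m.ih G' P Q _ (Finset.card_erase_lt_of_mem hf) hg
    have hAW := hA.sub.trans (Finset.erase_subset f W)
    apply m.nc
    refine ⟨A, hAW, hA.dP, ?_, ?_, ?_, ?_⟩
    · intro c hc hcQ hcA u hu h
      exact hA.dQ c (Finset.mem_erase.mpr ⟨fun e => hfQ (e ▸ hcQ), hc⟩) hcQ hcA u hu (hle _ _ h)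
    · intro u hu w hw h
      exact hA.ind u hu w hw (hle _ _ h)
    · intro c hc u hu w hw hcu hcw
      by_cases hcf : c = f
      · subst hcf
        have hno : ¬ (a ∈ A ∧ y ∈ A) := fun h =>
          hA.ind a h.1 y h.2 ((hadj a y).mpr (Or.inr (Or.inl ⟨rfl, rfl⟩)))
        rcases hnf u (hAW hu) hcu with h1 | h1 <;> rcases hnf w (hAW hw) hcw with h2 | h2
        · exact h1.trans h2.symm
        · exact absurd ⟨h1 ▸ hu, h2 ▸ hw⟩ hno
        · exact absurd ⟨h2 ▸ hw, h1 ▸ hu⟩ hno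
        · exact h1.trans h2.symm
      · exact hA.ind2 c (Finset.mem_erase.mpr ⟨hcf, hc⟩) u hu w hw (hle _ _ hcu) (hle _ _ hcw)
    · intro T hT hcore
      have hTW : T ⊆ W := hT.trans Finset.sdiff_subset
      have hsub : T.erase f ⊆ W.erase f \ A := by
        intro z hz
        have h1 := Finset.mem_erase.mp hz
        have h2 := Finset.mem_sdiff.mp (hT h1.2)
        exact Finset.mem_sdiff.mpr ⟨Finset.mem_erase.mpr ⟨h1.1, h2.1⟩, h2.2⟩
      by_cases hfT : f ∈ T
      · exfalso
        have hc := hcore f hfT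
        have hboth : a ∈ T ∧ y ∈ T := by
          constructor
          · by_contra h
            have : dg G T f ≤ 1 := dg_le_one (w := y) (fun u hu h' =>
              (hnf u (hTW hu) h').resolve_left (fun e => h (e ▸ hu)))
            omega
          · by_contra h
            have : dg G T f ≤ 1 := dg_le_one (w := a) (fun u hu h' =>
              (hnf u (hTW hu) h').resolve_right (fun e => h (e ▸ hu)))
            omega
        have hpair : ∀ z z', z' ∈ T.erase f → ¬ G.Adj z z' → G'.Adj z z' →
            dg G T z ≤ dg G' (T.erase f) z := by
          intro z z' hz' hn hy'
          have h1 : T.filter (fun u => G.Adj z u) ⊆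
              insert f ((T.erase f).filter (fun u => G.Adj z u)) := by
            intro u hu
            rw [Finset.mem_filter] at hu
            rw [Finset.mem_insert, Finset.mem_filter, Finset.mem_erase]
            tauto
          have h2 : insert z' ((T.erase f).filter (fun u => G.Adj z u)) ⊆
              (T.erase f).filter (fun u => G'.Adj z u) := by
            apply Finset.insert_subset
            · exact Finset.mem_filter.mpr ⟨hz', hy'⟩
            · intro u hu
              rw [Finset.mem_filter] at hu ⊢
              exact ⟨hu.1, hle _ _ hu.2⟩
          have h3 := (Finset.card_le_card h1).trans (Finset.card_insert_le _ _)
          have h4 := Finset.card_le_card h2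
          rw [Finset.card_insert_of_notMem (by simp [hn])] at h4
          unfold dg
          omega
        have haE : a ∈ T.erase f := Finset.mem_erase.mpr ⟨hfane.symm, hboth.1⟩
        have hyE : y ∈ T.erase f := Finset.mem_erase.mpr ⟨hfyne.symm, hboth.2⟩
        have h0 := hA.fst (T.erase f) hsub (by
          intro u hu
          have huT := Finset.mem_of_mem_erase hu
          refine (hcore u huT).trans ?_
          by_cases hua : u = a
          · subst hua
            exact hpair u y hyE hnay ((hadj _ _).mpr (Or.inr (Or.inl ⟨rfl, rfl⟩)))
          · by_cases huy : u = y
            · subst huy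
              exact hpair u a haE (fun h => hnay h.symm)
                ((hadj _ _).mpr (Or.inr (Or.inr ⟨rfl, rfl⟩)))
            · apply Finset.card_le_card
              intro w hw
              rw [Finset.mem_filter] at hw ⊢
              refine ⟨Finset.mem_erase.mpr ⟨?_, hw.1⟩, hle _ _ hw.2⟩
              rintro rfl
              rcases hnf u (hTW huT) hw.2.symm with h | h
              · exact hua h
              · exact huy h)
        rw [h0] at haE
        simp at haE
      · rw [Finset.erase_eq_of_notMem hfT] at hsub
        apply hA.fst T hsub
        intro u hu
        refine (hcore u hu).trans ?_
        apply Finset.card_le_card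
        intro w hw
        rw [Finset.mem_filter] at hw ⊢
        exact ⟨hw.1, hle _ _ hw.2⟩

lemma MinC.local_bound {G : SimpleGraph α} {P Q W : Finset α} (m : MinC G P Q W) {p : α}
    (hp : p ∈ W) (hU : ¬ U2 G P Q W p) :
    2 * (wt P Q p - 2 * dg G W p) +
      (if p ∈ Q then 2 else 1) * (dg G (W.filter (U2 G P Q W)) p : ℤ) ≤ 0 := by
  set Z := W.filter (U2 G P Q W) with hZ
  have hd := m.mindeg hp
  have hK : dg G Z p ≤ dg G W p := dg_mono G (Finset.filter_subset _ _) p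
  have hL : p ∉ P → dg G Z p < dg G W p := by
    intro hpP
    by_contra! hle
    apply m.redL hp hpP
    intro a ha hpa
    have hsub : Z.filter (fun u => G.Adj p u) ⊆ W.filter (fun u => G.Adj p u) :=
      Finset.filter_subset_filter _ (Finset.filter_subset _ _)
    have heq := Finset.eq_of_subset_of_card_le hsub hle
    have : a ∈ W.filter (fun u => G.Adj p u) := Finset.mem_filter.mpr ⟨ha, hpa⟩
    rw [← heq] at this
    exact (Finset.mem_filter.mp (Finset.mem_filter.mp this).1).2
  by_cases hQ : p ∈ Q <;> by_cases hP : p ∈ P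
  · simp only [wt, hQ, hP, if_true]
    omega
  · have := hL hP
    simp only [wt, hQ, hP, if_true, if_false]
    omega
  · simp only [wt, hQ, hP, if_true, if_false]
    by_cases h2 : dg G W p = 2
    · have : dg G Z p = 0 := by
        apply dg_eq_zero
        intro a ha hpa
        exact m.redR hp hP hQ h2 (Finset.mem_filter.mp ha).2 hpa
      omega
    · omega
  · have := hL hP
    have h2 : dg G W p ≠ 2 := fun h => hU ⟨hp, hP, hQ, h⟩
    simp only [wt, hQ, hP, if_false]
    omega

lemma MinC.false {G : SimpleGraph α} {P Q W : Finset α} (m : MinC G P Q W) : False := by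
  have hne : W.Nonempty := by
    rw [Finset.nonempty_iff_ne_empty]
    rintro rfl
    apply m.nc
    refine ⟨∅, by simp, by simp, by simp, by simp, by simp, ?_⟩
    intro T hT _
    simpa using hT
  have hpos := m.good W (Finset.Subset.refl _) hne
  set Z := W.filter (U2 G P Q W) with hZ
  set R := W.filter (fun v => ¬ U2 G P Q W v) with hR
  set h : α → ℤ := fun p => if U2 G P Q W p then 0 else if p ∈ Q then 2 else 1 with hh
  have hnn : ∀ p, 0 ≤ h p := by
    intro p; simp only [hh]; split_ifs <;> norm_num
  have hsplit : ∀ f : α → ℤ, ∑ v ∈ W, f v = ∑ v ∈ Z, f v + ∑ v ∈ R, f v := fun f =>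
    (Finset.sum_filter_add_sum_filter_not W (U2 G P Q W) f).symm
  have hpW : 2 * pot G P Q W = ∑ v ∈ W, 2 * (wt P Q v - 2 * dg G W v) := by
    unfold pot es
    rw [← Finset.mul_sum, Finset.sum_sub_distrib, ← Finset.mul_sum]
    push_cast
    ring
  have hZ2 : ∀ a ∈ Z, (2 : ℤ) ≤ ∑ p ∈ W, if G.Adj a p then h p else 0 := by
    intro a ha
    have hU := (Finset.mem_filter.mp ha).2
    have hd : dg G W a = 2 := hU.2.2.2
    obtain ⟨p, q, hpq, hE⟩ := Finset.card_eq_two.mp hd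
    have hp : p ∈ W.filter (fun u => G.Adj a u) := by rw [hE]; simp
    have hq : q ∈ W.filter (fun u => G.Adj a u) := by rw [hE]; simp
    rw [← Finset.sum_filter, hE, Finset.sum_pair hpq]
    rw [Finset.mem_filter] at hp hq
    have hnp := hnn p
    have hnq := hnn q
    by_cases hpQ : p ∈ Q
    · have : h p = 2 := by
        have : ¬ U2 G P Q W p := fun u => u.2.2.1 hpQ
        simp [hh, this, hpQ]
      omega
    by_cases hqQ : q ∈ Q
    · have : h q = 2 := by
        have : ¬ U2 G P Q W q := fun u => u.2.2.1 hqQ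
        simp [hh, this, hqQ]
      omega
    have h1 : h q = 1 := by
      have : ¬ U2 G P Q W q := fun u => m.redT hp.1 hpQ hU u hp.2 hq.2 hpq.symm
      simp [hh, this, hqQ]
    have h2 : h p = 1 := by
      have : ¬ U2 G P Q W p := fun u => m.redT hq.1 hqQ hU u hq.2 hp.2 hpq
      simp [hh, this, hpQ]
    omega
  have hswap : ∑ a ∈ Z, (2 : ℤ) ≤ ∑ p ∈ W, h p * dg G Z p := by
    refine (Finset.sum_le_sum hZ2).trans (le_of_eq ?_)
    rw [Finset.sum_comm]
    apply Finset.sum_congr rfl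
    intro p _
    rw [← Finset.sum_filter, Finset.sum_const, nsmul_eq_mul, mul_comm]
    unfold dg
    simp only [G.adj_comm]
  have hZs : ∑ v ∈ Z, 2 * (wt P Q v - 2 * dg G W v) = ∑ a ∈ Z, (2 : ℤ) := by
    apply Finset.sum_congr rfl
    intro a ha
    obtain ⟨_, h1, h2, h3⟩ := (Finset.mem_filter.mp ha).2
    simp [wt, h1, h2, h3]
  have hZ0 : ∑ p ∈ Z, h p * (dg G Z p : ℤ) = 0 := by
    apply Finset.sum_eq_zero
    intro p hp
    simp [hh, (Finset.mem_filter.mp hp).2]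
  have hRle : ∑ p ∈ R, (2 * (wt P Q p - 2 * dg G W p) + h p * dg G Z p) ≤ 0 := by
    apply Finset.sum_nonpos
    intro p hp
    rw [Finset.mem_filter] at hp
    have := m.local_bound hp.1 hp.2
    simp only [hh, hp.2, if_false]
    exact this
  rw [Finset.sum_add_distrib] at hRle
  rw [hsplit] at hpW hswap
  linarith

theorem main (G : SimpleGraph α) (P Q W : Finset α) (h : Good G P Q W) : ∃ A, Col G P Q W A := by
  have : ∀ n, IH α n := by
    intro n
    induction n with
    | zero => intro G P Q W hc; omega
    | succ n ihn =>
      intro G P Q W hc hg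
      by_cases hlt : W.card < n
      · exact ihn G P Q W hlt hg
      · by_contra hnc
        have hWn : W.card = n := by omega
        exact MinC.false ⟨hWn ▸ ihn, hg, hnc⟩
  exact this (W.card + 1) G P Q W (by omega) h

lemma acyclic_of_core [Finite α] {G : SimpleGraph α} {B : Set α}
    (h : ∀ T : Finset α, (T : Set α) ⊆ B → (∀ v ∈ T, 2 ≤ dg G T v) → T = ∅) :
    (G.induce B).IsAcyclic := by
  intro v c hc
  set T : Finset α := c.support.toFinset.image Subtype.val with hT
  have hmem : ∀ u : B, u ∈ c.support → (u : α) ∈ T := by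
    intro u hu
    exact Finset.mem_image.mpr ⟨u, by simpa using hu, rfl⟩
  have h0 := h T (by
    intro x hx
    obtain ⟨u, _, rfl⟩ := Finset.mem_image.mp (Finset.mem_coe.mp hx)
    exact u.2) (by
    intro x hx
    obtain ⟨u, hu, rfl⟩ := Finset.mem_image.mp hx
    have hu' : u ∈ c.support := by simpa using hu
    have h2 := hc.ncard_neighborSet_toSubgraph_eq_two hu'
    obtain ⟨a, b, hab, hE⟩ := Set.ncard_eq_two.mp h2
    have ha : a ∈ c.toSubgraph.neighborSet u := by rw [hE]; simp
    have hb : b ∈ c.toSubgraph.neighborSet u := by rw [hE]; simp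
    rw [Subgraph.mem_neighborSet] at ha hb
    have ha1 := c.mem_verts_toSubgraph.mp ha.snd_mem
    have hb1 := c.mem_verts_toSubgraph.mp hb.snd_mem
    exact dg_two (fun e => hab (Subtype.ext e)) (hmem a ha1) (hmem b hb1)
      ha.adj_sub hb.adj_sub)
  have := hmem v c.start_mem_support
  rw [h0] at this
  simp at this

lemma card_edges [Fintype α] (G : SimpleGraph α) (T : Finset α) :
    2 * Nat.card ((⊤ : G.Subgraph).induce (T : Set α)).edgeSet = es G T := by
  obtain ⟨K, hK⟩ : ∃ K : SimpleGraph α, K = ((⊤ : G.Subgraph).induce (T : Set α)).spanningCoe :=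
    ⟨_, rfl⟩
  have e1 : ((⊤ : G.Subgraph).induce (T : Set α)).edgeSet = K.edgeSet := by
    rw [hK]; simp
  have hadj : ∀ u w, K.Adj u w ↔ u ∈ T ∧ w ∈ T ∧ G.Adj u w := by
    intro u w
    rw [hK]; simp
  have h1 := K.sum_degrees_eq_twice_card_edges
  have h2 : Nat.card K.edgeSet = K.edgeFinset.card := by
    rw [Nat.card_eq_fintype_card, SimpleGraph.edgeFinset_card]
  rw [e1, h2, ← h1]
  unfold es
  rw [← Finset.sum_subset (Finset.subset_univ T)]
  · apply Finset.sum_congr rfl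
    intro v hv
    unfold dg
    rw [← SimpleGraph.card_neighborFinset_eq_degree]
    congr 1
    ext u
    simp [hadj, hv]
  · intro v _ hv
    rw [← SimpleGraph.card_neighborFinset_eq_degree, Finset.card_eq_zero]
    ext u
    simp [hadj, hv]

lemma rho_induce [Fintype α] (G : SimpleGraph α) (I F U : Set α) (h : IsAssignment I F U)
    (T : Finset α) :
    rho G I F U ((⊤ : G.Subgraph).induce (T : Set α)) =
      ∑ v ∈ T, (if v ∈ I then (1 : ℤ) else if v ∈ F then 4 else 5) - 2 * es G T := by
  have hn : ∀ X : Set α, (((T : Set α) ∩ X).ncard : ℤ) = ∑ v ∈ T, if v ∈ X then (1 : ℤ) else 0 := by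
    intro X
    have : (T : Set α) ∩ X = ((T.filter (· ∈ X) : Finset α) : Set α) := by
      ext x; simp
    rw [this, Set.ncard_coe_finset, Finset.sum_boole]
  unfold rho
  rw [← card_edges G T]
  simp only [Subgraph.induce_verts, hn]
  rw [Finset.mul_sum, Finset.mul_sum, ← Finset.sum_add_distrib, ← Finset.sum_add_distrib]
  have : ∀ v ∈ T, (if v ∈ I then (1 : ℤ) else 0) + 4 * (if v ∈ F then (1 : ℤ) else 0) +
      5 * (if v ∈ U then (1 : ℤ) else 0) = if v ∈ I then (1 : ℤ) else if v ∈ F then 4 else 5 := by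
    intro v _
    obtain ⟨h1, h2, h3, h4⟩ := h
    have hv : v ∈ I ∪ F ∪ U := by rw [h1]; trivial
    have d1 : v ∈ I → v ∉ F := fun a b => Set.disjoint_left.mp h2 a b
    have d2 : v ∈ I → v ∉ U := fun a b => Set.disjoint_left.mp h3 a b
    have d3 : v ∈ F → v ∉ U := fun a b => Set.disjoint_left.mp h4 a b
    by_cases hI : v ∈ I
    · simp [hI, d1 hI, d2 hI]
    · by_cases hF : v ∈ F
      · simp [hI, hF, d3 hF]
      · have hU : v ∈ U := by simpa [hI, hF] using hv
        simp [hI, hF, hU]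
  rw [Finset.sum_congr rfl this]
  push_cast
  ring

theorem final [Fintype α] (G : SimpleGraph α)
    (I F U : Set α) (hassign : IsAssignment I F U)
    (hpot : ∀ H : G.Subgraph, H.verts.Nonempty → 0 < rho G I F U H) :
    ∃ A B : Set α, IsIFPartition G A B ∧ I ⊆ A ∧ F ⊆ B := by
  have hr : ∀ T : Finset α, T.Nonempty →
      0 < ∑ v ∈ T, (if v ∈ I then (1 : ℤ) else if v ∈ F then 4 else 5) - 2 * es G T := by
    intro T hT
    rw [← rho_induce G I F U hassign T]
    apply hpot
    simpa using hT
  have hIF : Disjoint I F := hassign.2.1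
  set W : Finset α := Finset.univ.filter (fun v => v ∉ I) with hW
  have hWm : ∀ v, v ∈ W ↔ v ∉ I := by intro v; simp [hW]
  set NI : Finset α := Finset.univ.filter (fun v => ∃ i ∈ I, G.Adj v i) with hNI
  have hNm : ∀ v, v ∈ NI ↔ ∃ i ∈ I, G.Adj v i := by intro v; simp [hNI]
  set P : Finset α := Finset.univ.filter (fun v => v ∈ F) with hP
  have hPm : ∀ v, v ∈ P ↔ v ∈ F := by intro v; simp [hP]
  have hg : Good G (P ∪ NI) (∅ ∪ NI) W := by
    intro T hT hTne
    have hm := pot_mark G P ∅ NI NI T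
    have hch : ∀ t ∈ T ∩ NI, ∃ i ∈ I, G.Adj t i := by
      intro t ht
      exact (hNm t).mp (Finset.mem_inter.mp ht).2
    choose! f hf1 hf2 using hch
    set I' := (T ∩ NI).image f with hI'
    have hI'I : ∀ i ∈ I', i ∈ I := by
      intro i hi
      obtain ⟨t, ht, rfl⟩ := Finset.mem_image.mp hi
      exact hf1 t ht
    have hdisj : Disjoint T I' := by
      rw [Finset.disjoint_left]
      intro x hx hx'
      exact (hWm x).mp (hT hx) (hI'I x hx')
    have hcI : I'.card ≤ (T ∩ NI).card := Finset.card_image_le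
    have hcr : (T ∩ NI).card ≤ cross G T I' := by
      have : (T ∩ (T ∩ NI)).card ≤ cross G T I' := by
        apply inter_le_cross
        intro t ht
        exact ⟨f t, Finset.mem_image_of_mem f ht, hf2 t ht⟩
      rwa [← Finset.inter_assoc, Finset.inter_self] at this
    have h1 := hr (T ∪ I') (hTne.mono Finset.subset_union_left)
    rw [Finset.sum_union hdisj, es_union G hdisj] at h1
    have h2 : ∑ v ∈ I', (if v ∈ I then (1 : ℤ) else if v ∈ F then 4 else 5) = I'.card := by
      rw [Finset.sum_congr rfl (g := fun _ => (1 : ℤ)) (fun v hv => by simp [hI'I v hv])]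
      simp
    have h3 : ∑ v ∈ T, (if v ∈ I then (1 : ℤ) else if v ∈ F then 4 else 5)
        = ∑ v ∈ T, wt P ∅ v := by
      apply Finset.sum_congr rfl
      intro v hv
      have hvI := (hWm v).mp (hT hv)
      by_cases hvF : v ∈ F <;> simp [wt, hvI, hPm, hvF]
    rw [h2, h3] at h1
    have h4 : pot G P ∅ T = ∑ v ∈ T, wt P ∅ v - 2 * es G T := rfl
    push_cast at h1
    omega
  rw [Finset.empty_union] at hg
  obtain ⟨A, hA⟩ := main G _ _ W hg
  have hAI : ∀ u ∈ A, ∀ i ∈ I, ¬ G.Adj u i := by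
    intro u hu i hi h
    exact hA.dP u hu (Finset.mem_union_right _ ((hNm u).mpr ⟨i, hi, h⟩))
  have hmix : ∀ u ∈ A, ∀ v ∈ I, ∀ w, G.Adj u w → G.Adj w v → False := by
    intro u hu v hv w huw hwv
    by_cases hwI : w ∈ I
    · exact hAI u hu w hwI huw
    · have hwN : w ∈ NI := (hNm w).mpr ⟨v, hv, hwv⟩
      have hwA : w ∉ A := fun h => hA.dP w h (Finset.mem_union_right _ hwN)
      exact hA.dQ w ((hWm w).mpr hwI) hwN hwA u hu huw.symm
  have hII : ∀ u ∈ I, ∀ v ∈ I, u ≠ v → ¬ G.Adj u v := by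
    intro u hu v hv huv h
    have h1 := hr {u, v} ⟨u, by simp⟩
    rw [Finset.sum_pair huv, es_insert G (by simpa using huv), es_singleton] at h1
    have := dg_pos (T := {v}) (by simp) h
    simp only [hu, hv, if_true] at h1
    push_cast at h1
    omega
  have hIcI : ∀ u ∈ I, ∀ v ∈ I, u ≠ v → ∀ w, G.Adj u w → G.Adj w v → False := by
    intro u hu v hv huv w huw hwv
    have hw : w ∉ ({u, v} : Finset α) := by
      simp only [Finset.mem_insert, Finset.mem_singleton, not_or]
      exact ⟨huw.ne', hwv.ne⟩
    have h1 := hr (insert w {u, v}) ⟨u, by simp⟩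
    rw [Finset.sum_insert hw, Finset.sum_pair huv, es_insert G hw] at h1
    have := dg_two (T := {u, v}) huv (by simp) (by simp) huw.symm hwv
    have h5 : (if w ∈ I then (1 : ℤ) else if w ∈ F then 4 else 5) ≤ 5 := by
      split_ifs <;> norm_num
    simp only [hu, hv, if_true] at h1
    push_cast at h1
    omega
  refine ⟨(A : Set α) ∪ I, ((A : Set α) ∪ I)ᶜ, ⟨Set.union_compl_self _, disjoint_compl_right,
    ?_, ?_⟩, Set.subset_union_right, ?_⟩
  · intro u hu v hv huv
    rcases hu with hu | hu <;> rcases hv with hv | hv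
    · refine ⟨hA.ind u hu v hv, ?_⟩
      rintro w ⟨huw, hwv⟩
      by_cases hwI : w ∈ I
      · exact hAI u hu w hwI huw
      · exact huv (hA.ind2 w ((hWm w).mpr hwI) u hu v hv huw.symm hwv)
    · exact ⟨hAI u hu v hv, fun w h => hmix u hu v hv w h.1 h.2⟩
    · exact ⟨fun h => hAI v hv u hu h.symm, fun w h => hmix v hv u hu w h.2.symm h.1.symm⟩
    · exact ⟨hII u hu v hv huv, fun w h => hIcI u hu v hv huv w h.1 h.2⟩
  · apply acyclic_of_core
    intro T hT hcore
    apply hA.fst T _ hcore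
    intro x hx
    have := hT hx
    simp only [Set.mem_compl_iff, Set.mem_union, not_or] at this
    exact Finset.mem_sdiff.mpr ⟨(hWm x).mpr this.2, this.1⟩
  · intro x hx hx'
    rcases hx' with h | h
    · exact hA.dP x h (Finset.mem_union_left _ ((hPm x).mpr hx))
    · exact Set.disjoint_left.mp hIF h hx

end Aux

end IFP

/-- Theorem 1.6: if `G` is an assigned graph with vertex set partitioned as `I ⊔ F ⊔ U`
and every nonempty subgraph has positive potential, then `G` has an I,F-partition
`𝓘 ⊔ 𝓕` with `I ⊆ 𝓘` and `F ⊆ 𝓕`. -/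
theorem ifPartition_of_potential_pos {V : Type*} [Fintype V] (G : SimpleGraph V)
    (I F U : Set V) (hassign : IsAssignment I F U)
    (hpot : ∀ H : G.Subgraph, H.verts.Nonempty → 0 < rho G I F U H) :
    ∃ A B : Set V, IsIFPartition G A B ∧ I ⊆ A ∧ F ⊆ B := by
  exact IFP.final G I F U hassign hpot
end

section
/- Every finite forest has star chromatic number at most 3; that is, if T is a finite simple graph with no cycles, then χ_s(T) ≤ 3. -/
open SimpleGraph

theorem unique_parent_of_acyclic {V : Type*} (T : SimpleGraph V) (h : T.IsAcyclic) {r u v w : V}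
    (hr : T.Reachable r v) (hu : T.Adj u v) (hw : T.Adj w v)
    (du : T.dist r u + 1 = T.dist r v) (dw : T.dist r w + 1 = T.dist r v) : u = w := by
  obtain ⟨p, hp⟩ := (hr.trans hu.symm.reachable).exists_walk_length_eq_dist
  obtain ⟨q, hq⟩ := (hr.trans hw.symm.reachable).exists_walk_length_eq_dist
  have hp' : (p.concat hu).IsPath :=
    Walk.isPath_of_length_eq_dist _ (by rw [Walk.length_concat]; omega)
  have hq' : (q.concat hw).IsPath :=
    Walk.isPath_of_length_eq_dist _ (by rw [Walk.length_concat]; omega)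
  have e := congrArg (fun x : T.Path r v => x.1.penultimate)
    (h.path_unique ⟨_, hp'⟩ ⟨_, hq'⟩)
  simpa using e

/-- Every finite forest has star chromatic number at most `3`. -/
theorem starChromatic_le_three_of_isAcyclic {V : Type*} [Fintype V] (T : SimpleGraph V)
    (h : T.IsAcyclic) : StarColorable T 3 := by
  classical
  let r : V → V := fun v => (T.connectedComponentMk v).out
  have hr : ∀ v, T.Reachable (r v) v := fun v =>
    ConnectedComponent.exact (Quot.out_eq (T.connectedComponentMk v))
  have hrr : ∀ u v, T.Adj u v → r u = r v := fun u v huv => by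
    have : T.connectedComponentMk u = T.connectedComponentMk v :=
      ConnectedComponent.sound huv.reachable
    simp only [r, this]
  let d : V → ℕ := fun v => T.dist (r v) v
  have hd : ∀ u v, T.Adj u v → d u = d v + 1 ∨ d v = d u + 1 := fun u v huv => by
    have := h.dist_eq_dist_add_one_of_adj_of_reachable (r u) huv (hr u)
    simp only [d, ← hrr u v huv]
    omega
  have hpar : ∀ u v w, T.Adj u v → T.Adj w v → d u + 1 = d v → d w + 1 = d v → u = w :=
    fun u v w hu hw du dw => by
      simp only [d, hrr u v hu] at du
      simp only [d, hrr w v hw] at dw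
      exact unique_parent_of_acyclic T h (hr v) hu hw du dw
  have hprop : ∀ u v, T.Adj u v → d u % 3 ≠ d v % 3 := fun u v huv => by
    have := hd u v huv
    omega
  refine ⟨fun v => ⟨d v % 3, Nat.mod_lt _ (by norm_num)⟩, ?_, ?_⟩
  · intro u v huv e
    exact hprop u v huv (by simpa [Fin.ext_iff] using e)
  · intro i j
    refine ⟨h.induce _, ?_⟩
    rintro ⟨a, ha⟩ ⟨b, hb⟩ ⟨c, hc⟩ ⟨e, he⟩ hab hbc hce
    simp only [comap_adj, Function.Embedding.subtype_apply, induce] at hab hbc hce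
    simp only [Set.mem_setOf_eq, Fin.ext_iff] at ha hb hc he
    simp only [Subtype.mk.injEq]
    have h1 := hd _ _ hab
    have h2 := hd _ _ hbc
    have h3 := hd _ _ hce
    have hac : d a = d c := by omega
    have hbe : d b = d e := by omega
    rcases h1 with h1 | h1
    · right
      exact hpar b c e hbc hce.symm (by omega) (by omega)
    · left
      exact hpar a b c hab hbc.symm (by omega) (by omega)
end

section
/- If a finite simple graph G has an I,F-partition, then its star chromatic number satisfies χ_s(G) ≤ 4. -/
open SimpleGraph

/-- In a graph where every walk with three edges is degenerate there are no cycles. -/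
lemma isAcyclic_of_noP4 {V : Type*} (H : SimpleGraph V)
    (h : ∀ a b c d : V, H.Adj a b → H.Adj b c → H.Adj c d → a = c ∨ b = d) :
    H.IsAcyclic := by
  intro v w hw
  cases w with
  | nil => exact Walk.not_isCycle_nil hw
  | cons h1 p =>
    cases p with
    | nil => exact h1.ne rfl
    | cons h2 q =>
      cases q with
      | nil =>
        have := hw.three_le_length
        simp at this
      | cons h3 r =>
        have hn := hw.support_nodup
        rcases h _ _ _ _ h1 h2 h3 with e | e
        · subst e
          simp at hn
        · subst e
          simp at hn

/-- A forest has a level function in which each vertex has at most one lower neighbour. -/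
lemma exists_level {W : Type*} (F : SimpleGraph W) (hF : F.IsAcyclic) :
    ∃ f : W → ℕ, (∀ u v, F.Adj u v → f u = f v + 1 ∨ f v = f u + 1) ∧
      ∀ u u' v, F.Adj u v → F.Adj u' v → f v = f u + 1 → f v = f u' + 1 → u = u' := by
  let r : W → W := fun v => (F.connectedComponentMk v).out
  have hr : ∀ v, F.Reachable (r v) v := fun v =>
    ConnectedComponent.exact (Quot.out_eq (F.connectedComponentMk v))
  have hadj : ∀ u v, F.Adj u v → r u = r v := fun u v h => by
    simp only [r, ConnectedComponent.sound h.reachable]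
  refine ⟨fun v => F.dist (r v) v, ?_, ?_⟩
  · intro u v h
    have := hF.dist_eq_dist_add_one_of_adj_of_reachable (r u) h (hr u)
    simpa only [← hadj u v h] using this
  · intro u u' v h h' e e'
    simp only [hadj u v h] at e
    simp only [hadj u' v h'] at e'
    obtain ⟨p, hp⟩ := (hadj u v h ▸ hr u).exists_walk_length_eq_dist
    obtain ⟨q, hq⟩ := (hadj u' v h' ▸ hr u').exists_walk_length_eq_dist
    have hp' : (p.concat h).IsPath := Walk.isPath_of_length_eq_dist _ (by simp [hp, e])
    have hq' : (q.concat h').IsPath := Walk.isPath_of_length_eq_dist _ (by simp [hq, e'])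
    have := congrArg Subtype.val ((hF.subsingleton_path _ _).elim ⟨_, hp'⟩ ⟨_, hq'⟩)
    exact (Walk.concat_inj this).1

/-- If a finite simple graph has an I,F-partition, then its star chromatic number
is at most `4`. -/
theorem starChromatic_le_four_of_ifPartition {V : Type*} [Fintype V] (G : SimpleGraph V)
    (A B : Set V) (h : IsIFPartition G A B) : StarColorable G 4 := by
  classical
  obtain ⟨hU, -, hA, hB⟩ := h
  have hAB : ∀ v, v ∉ B → v ∈ A := fun v hv => by
    have : v ∈ A ∪ B := hU ▸ Set.mem_univ v
    exact this.resolve_right hv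
  obtain ⟨f, hf1, hf2⟩ := exists_level _ hB
  let g : V → ℕ := fun v => if hv : v ∈ B then f ⟨v, hv⟩ else 0
  have hg1 : ∀ u v, u ∈ B → v ∈ B → G.Adj u v → g u = g v + 1 ∨ g v = g u + 1 := by
    intro u v hu hv huv
    simpa [g, hu, hv] using hf1 ⟨u, hu⟩ ⟨v, hv⟩ huv
  have hg2 : ∀ u u' v, u ∈ B → u' ∈ B → v ∈ B → G.Adj u v → G.Adj u' v →
      g v = g u + 1 → g v = g u' + 1 → u = u' := by
    intro u u' v hu hu' hv h1 h2 e1 e2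
    have := hf2 ⟨u, hu⟩ ⟨u', hu'⟩ ⟨v, hv⟩ h1 h2 (by simpa [g, hu, hv] using e1)
      (by simpa [g, hu', hv] using e2)
    exact congrArg Subtype.val this
  let c : V → Fin 4 := fun v => if v ∈ B then ⟨g v % 3, by omega⟩ else 3
  have hcB : ∀ v, v ∈ B → (c v : ℕ) = g v % 3 := fun v hv => by simp [c, hv]
  have hcA : ∀ v, v ∉ B → (c v : ℕ) = 3 := fun v hv => by simp [c, hv]
  have hmem : ∀ u v, c u = c v → (u ∈ B ↔ v ∈ B) := by
    intro u v e
    have e' : (c u : ℕ) = c v := congrArg Fin.val e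
    by_cases hu : u ∈ B <;> by_cases hv : v ∈ B <;> simp only [hu, hv]
    · rw [hcB u hu, hcA v hv] at e'; omega
    · rw [hcA u hu, hcB v hv] at e'; omega
  have hmod : ∀ u v, u ∈ B → v ∈ B → c u = c v → g u % 3 = g v % 3 := by
    intro u v hu hv e
    rw [← hcB u hu, ← hcB v hv, e]
  have hproper : ∀ u v, G.Adj u v → c u ≠ c v := by
    intro u v huv e
    have hm := hmem u v e
    by_cases hu : u ∈ B
    · have hv := hm.1 hu
      have := hmod u v hu hv e
      have := hg1 u v hu hv huv
      omega
    · exact (hA u (hAB u hu) v (hAB v (fun hv => hu (hm.2 hv))) huv.ne).1 huv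
  have hP : ∀ x y z w, G.Adj x y → G.Adj y z → G.Adj z w → c x = c z → c y = c w →
      x = z ∨ y = w := by
    intro x y z w hxy hyz hzw e1 e2
    by_contra! hne
    have m1 := hmem x z e1
    have m2 := hmem y w e2
    by_cases hx : x ∈ B
    · by_cases hy : y ∈ B
      · have hz := m1.1 hx
        have hw := m2.1 hy
        have k1 := hmod x z hx hz e1
        have k2 := hmod y w hy hw e2
        have a1 := hg1 x y hx hy hxy
        have a2 := hg1 y z hy hz hyz
        have a3 := hg1 z w hz hw hzw
        rcases a2 with a2 | a2
        · exact hne.1 (hg2 x z y hx hz hy hxy hyz.symm (by omega) a2)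
        · exact hne.2 (hg2 y w z hy hw hz hyz hzw.symm a2 (by omega))
      · exact (hA y (hAB y hy) w (hAB w (fun hw => hy (m2.2 hw))) hne.2).2 z ⟨hyz, hzw⟩
    · exact (hA x (hAB x hx) z (hAB z (fun hz => hx (m1.2 hz))) hne.1).2 y ⟨hxy, hyz⟩
  refine ⟨c, hproper, fun i j => ?_⟩
  have key : ∀ x y z w, (G.induce {v | c v = i ∨ c v = j}).Adj x y →
      (G.induce {v | c v = i ∨ c v = j}).Adj y z →
      (G.induce {v | c v = i ∨ c v = j}).Adj z w → x = z ∨ y = w := by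
    rintro ⟨x, hx⟩ ⟨y, hy⟩ ⟨z, hz⟩ ⟨w, hw⟩ h1 h2 h3
    have h1 : G.Adj x y := h1
    have h2 : G.Adj y z := h2
    have h3 : G.Adj z w := h3
    have p1 := hproper _ _ h1
    have p2 := hproper _ _ h2
    have p3 := hproper _ _ h3
    simp only [Set.mem_setOf_eq] at hx hy hz hw
    have := hP x y z w h1 h2 h3 (by grind) (by grind)
    simpa using this
  exact ⟨isAcyclic_of_noP4 _ key, key⟩
end

section
/- For each n ≥ 3, let G_n be the graph obtained from a cycle C with vertices v_1, …, v_n by adding, for each i, three new vertices a_i, b_i, c_i forming a triangle together with the edge v_i a_i. Then Mad(G_n) = 5/2 and G_n has no I,F-partition. -/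
open SimpleGraph

/-- The sharpness example `G_n`: a cycle `v_1, …, v_n` (the vertices `Sum.inl i`) where each
`v_i` has a pendant triangle `a_i b_i c_i` (the vertices `Sum.inr (i, 0/1/2)`) attached by the
edge `v_i a_i`. -/
def sharpGraph (n : ℕ) : SimpleGraph (Fin n ⊕ Fin n × Fin 3) :=
  SimpleGraph.fromRel (fun x y =>
    (∃ i : Fin n, x = Sum.inl i ∧
      y = Sum.inl ⟨((i : ℕ) + 1) % n, Nat.mod_lt _ (Nat.lt_of_le_of_lt (Nat.zero_le _) i.isLt)⟩) ∨
    (∃ i : Fin n, x = Sum.inl i ∧ y = Sum.inr (i, 0)) ∨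
    (∃ (i : Fin n) (j k : Fin 3), j ≠ k ∧ x = Sum.inr (i, j) ∧ y = Sum.inr (i, k)))

/-- Cyclic successor. -/
def nxt {n : ℕ} (i : Fin n) : Fin n :=
  ⟨((i : ℕ) + 1) % n, Nat.mod_lt _ (Nat.lt_of_le_of_lt (Nat.zero_le _) i.isLt)⟩

lemma nxt_val {n : ℕ} (i : Fin n) :
    ((nxt i : Fin n) : ℕ) = if (i : ℕ) + 1 = n then 0 else (i : ℕ) + 1 := by
  have := i.isLt
  unfold nxt
  split_ifs with h
  · simp [h]
  · exact Nat.mod_eq_of_lt (by omega)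

lemma nxt_ne {n : ℕ} (hn : 3 ≤ n) (i : Fin n) : nxt i ≠ i := by
  intro h
  have h1 := congrArg Fin.val h
  rw [nxt_val] at h1
  split_ifs at h1 <;> omega

lemma nxt_nxt_ne {n : ℕ} (hn : 3 ≤ n) (i j : Fin n) (h1 : nxt i = j) (h2 : nxt j = i) :
    False := by
  have h1 := congrArg Fin.val h1
  have h2 := congrArg Fin.val h2
  rw [nxt_val] at h1 h2
  split_ifs at h1 h2 <;> omega

lemma sharp_adj {n : ℕ} (x y : Fin n ⊕ Fin n × Fin 3) :
    (sharpGraph n).Adj x y ↔ x ≠ y ∧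
      (((∃ i : Fin n, x = Sum.inl i ∧ y = Sum.inl (nxt i)) ∨
        (∃ i : Fin n, x = Sum.inl i ∧ y = Sum.inr (i, 0)) ∨
        (∃ (i : Fin n) (j k : Fin 3), j ≠ k ∧ x = Sum.inr (i, j) ∧ y = Sum.inr (i, k))) ∨
       ((∃ i : Fin n, y = Sum.inl i ∧ x = Sum.inl (nxt i)) ∨
        (∃ i : Fin n, y = Sum.inl i ∧ x = Sum.inr (i, 0)) ∨
        (∃ (i : Fin n) (j k : Fin 3), j ≠ k ∧ y = Sum.inr (i, j) ∧ x = Sum.inr (i, k)))) :=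
  Iff.rfl

lemma adj_cycle {n : ℕ} (hn : 3 ≤ n) (i : Fin n) :
    (sharpGraph n).Adj (Sum.inl i) (Sum.inl (nxt i)) := by
  rw [sharp_adj]
  refine ⟨?_, Or.inl (Or.inl ⟨i, rfl, rfl⟩)⟩
  intro h
  exact nxt_ne hn i (Sum.inl.inj h).symm

lemma adj_pend {n : ℕ} (i : Fin n) :
    (sharpGraph n).Adj (Sum.inl i) (Sum.inr (i, 0)) := by
  rw [sharp_adj]
  exact ⟨by simp, Or.inl (Or.inr (Or.inl ⟨i, rfl, rfl⟩))⟩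

lemma adj_tri {n : ℕ} (i : Fin n) (j k : Fin 3) (h : j ≠ k) :
    (sharpGraph n).Adj (Sum.inr (i, j)) (Sum.inr (i, k)) := by
  rw [sharp_adj]
  exact ⟨by simpa using h, Or.inl (Or.inr (Or.inr ⟨i, j, k, h, rfl, rfl⟩))⟩

lemma not_acyclic_of_cyc {V : Type*} {G : SimpleGraph V} {n : ℕ} (hn : 3 ≤ n) (f : Fin n → V)
    (hf : Function.Injective f) (hadj : ∀ i, G.Adj (f i) (f (nxt i))) : ¬ G.IsAcyclic := by
  intro h
  have key : ∀ u v : Fin n, (v - u).val = 1 → v = nxt u := by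
    intro u v huv
    have hu := u.isLt
    have hv := v.isLt
    rw [Fin.val_sub] at huv
    apply Fin.ext
    rw [nxt_val]
    by_cases huv' : u.val ≤ v.val
    · rw [show n - u.val + v.val = (v.val - u.val) + n by omega, Nat.add_mod_right,
        Nat.mod_eq_of_lt (by omega)] at huv
      split_ifs <;> omega
    · rw [Nat.mod_eq_of_lt (by omega)] at huv
      split_ifs <;> omega
  refine isAcyclic_iff_free_cycleGraph.mp h n hn ⟨⟨⟨f, ?_⟩, hf⟩⟩
  intro u v huv
  rw [cycleGraph_adj'] at huv
  rcases huv with h1 | h1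
  · rw [key _ _ h1]
    exact (hadj v).symm
  · rw [key _ _ h1]
    exact hadj u

lemma no_partition (n : ℕ) (hn : 3 ≤ n) :
    ¬ ∃ A B : Set (Fin n ⊕ Fin n × Fin 3), IsIFPartition (sharpGraph n) A B := by
  rintro ⟨A, B, hU, -, hA, hB⟩
  have hmem : ∀ x, x ∉ A → x ∈ B := fun x hx =>
    ((Set.mem_union _ _ _).1 (hU ▸ Set.mem_univ x : x ∈ A ∪ B)).resolve_left hx
  have htri : ∀ i : Fin n, ∃ j : Fin 3, (Sum.inr (i, j) : Fin n ⊕ Fin n × Fin 3) ∈ A := by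
    intro i
    by_contra hcon
    push Not at hcon
    refine not_acyclic_of_cyc (G := (sharpGraph n).induce B) (le_refl 3)
      (fun j => ⟨Sum.inr (i, j), hmem _ (hcon j)⟩) ?_ ?_ hB
    · intro a b hab
      simpa using hab
    · intro j
      exact adj_tri i j (nxt j) (nxt_ne (le_refl 3) j).symm
  have hv : ∀ i : Fin n, (Sum.inl i : Fin n ⊕ Fin n × Fin 3) ∉ A := by
    intro i hi
    obtain ⟨j, hj⟩ := htri i
    have := hA _ hi _ hj (by simp)
    by_cases h0 : j = 0
    · subst h0
      exact this.1 (adj_pend i)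
    · exact this.2 _ ⟨adj_pend i, adj_tri i 0 j (Ne.symm h0)⟩
  refine not_acyclic_of_cyc (G := (sharpGraph n).induce B) hn
      (fun i => ⟨Sum.inl i, hmem _ (hv i)⟩) ?_ ?_ hB
  · intro a b hab
    simpa using hab
  · intro i
    exact adj_cycle hn i

/-- The list of the edges of the graph: five edges for each index. -/
def edg {n : ℕ} (p : Fin n × Fin 5) : Sym2 (Fin n ⊕ Fin n × Fin 3) :=
  match p.2 with
  | 0 => s(Sum.inl p.1, Sum.inl (nxt p.1))
  | 1 => s(Sum.inl p.1, Sum.inr (p.1, 0))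
  | 2 => s(Sum.inr (p.1, 0), Sum.inr (p.1, 1))
  | 3 => s(Sum.inr (p.1, 0), Sum.inr (p.1, 2))
  | 4 => s(Sum.inr (p.1, 1), Sum.inr (p.1, 2))

lemma edg_inj {n : ℕ} (hn : 3 ≤ n) : Function.Injective (edg (n := n)) := by
  rintro ⟨i, a⟩ ⟨j, b⟩ h
  have := nxt_nxt_ne hn i j
  fin_cases a <;> fin_cases b <;> simp [edg] at h ⊢ <;> grind

lemma edg_mem {n : ℕ} (hn : 3 ≤ n) (p : Fin n × Fin 5) : edg p ∈ (sharpGraph n).edgeSet := by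
  obtain ⟨i, a⟩ := p
  fin_cases a
  · exact adj_cycle hn i
  · exact adj_pend i
  · exact adj_tri i 0 1 (by decide)
  · exact adj_tri i 0 2 (by decide)
  · exact adj_tri i 1 2 (by decide)

lemma tri_range {n : ℕ} (i : Fin n) (j k : Fin 3) (h : j ≠ k) :
    ∃ p : Fin n × Fin 5, edg p = s(Sum.inr (i, j), Sum.inr (i, k)) := by
  fin_cases j <;> fin_cases k <;> first
    | exact absurd rfl h
    | exact ⟨(i, 2), rfl⟩
    | exact ⟨(i, 3), rfl⟩
    | exact ⟨(i, 4), rfl⟩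
    | exact ⟨(i, 2), Sym2.eq_swap⟩
    | exact ⟨(i, 3), Sym2.eq_swap⟩
    | exact ⟨(i, 4), Sym2.eq_swap⟩

lemma edg_surj {n : ℕ} (e : Sym2 (Fin n ⊕ Fin n × Fin 3)) (he : e ∈ (sharpGraph n).edgeSet) :
    ∃ p, edg p = e := by
  induction e using Sym2.ind with
  | _ x y =>
    rw [SimpleGraph.mem_edgeSet, sharp_adj] at he
    rcases he.2 with (⟨i, rfl, rfl⟩ | ⟨i, rfl, rfl⟩ | ⟨i, j, k, h, rfl, rfl⟩) |
      (⟨i, rfl, rfl⟩ | ⟨i, rfl, rfl⟩ | ⟨i, j, k, h, rfl, rfl⟩)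
    · exact ⟨(i, 0), rfl⟩
    · exact ⟨(i, 1), rfl⟩
    · exact tri_range i j k h
    · exact ⟨(i, 0), Sym2.eq_swap⟩
    · exact ⟨(i, 1), Sym2.eq_swap⟩
    · exact tri_range i k j h.symm

lemma card_top (n : ℕ) (hn : 3 ≤ n) :
    Nat.card (⊤ : (sharpGraph n).Subgraph).edgeSet = 5 * n := by
  have : (⊤ : (sharpGraph n).Subgraph).edgeSet = Set.range (edg (n := n)) := by
    ext e
    rw [Subgraph.edgeSet_top]
    constructor
    · exact edg_surj e
    · rintro ⟨p, rfl⟩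
      exact edg_mem hn p
  rw [this, Nat.card_range_of_injective (edg_inj hn)]
  simp [mul_comm]

open Classical in
lemma upper (n : ℕ) (H : (sharpGraph n).Subgraph) :
    4 * Nat.card H.edgeSet ≤ 5 * H.verts.ncard := by
  have h1 : Nat.card H.edgeSet ≤ ∑ i : Fin n, ∑ k : Fin 5,
      if edg (i, k) ∈ H.edgeSet then 1 else 0 := by
    have hsub : H.edgeSet ⊆
        ((Finset.univ.filter (fun p : Fin n × Fin 5 => edg p ∈ H.edgeSet)).image edg :
          Finset (Sym2 (Fin n ⊕ Fin n × Fin 3))) := by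
      intro e he
      obtain ⟨p, rfl⟩ := edg_surj e (H.edgeSet_subset he)
      simp only [Finset.coe_image, Finset.coe_filter, Finset.mem_univ, true_and]
      exact ⟨p, he, rfl⟩
    rw [Nat.card_coe_set_eq]
    refine (Set.ncard_le_ncard hsub (Finset.finite_toSet _)).trans ?_
    rw [Set.ncard_coe_finset]
    refine Finset.card_image_le.trans ?_
    rw [Finset.card_filter, Fintype.sum_prod_type]
  have h2 : H.verts.ncard = ∑ i : Fin n, ((if Sum.inl i ∈ H.verts then 1 else 0) +
      ∑ j : Fin 3, if Sum.inr (i, j) ∈ H.verts then 1 else 0) := by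
    rw [Set.ncard_eq_toFinset_card', Finset.sum_add_distrib, ← Fintype.sum_prod_type',
      ← Fintype.sum_sum_type (fun x => if x ∈ H.verts then 1 else 0), ← Finset.card_filter]
    congr 1
    ext x
    simp
  rw [h2, Finset.mul_sum]
  refine (Nat.mul_le_mul_left 4 h1).trans ?_
  rw [Finset.mul_sum]
  refine Finset.sum_le_sum fun i _ => ?_
  have e0 : edg (i, 0) ∈ H.edgeSet → Sum.inl i ∈ H.verts := fun h => H.edge_vert h
  have e1 : edg (i, 1) ∈ H.edgeSet → Sum.inl i ∈ H.verts ∧ Sum.inr (i, 0) ∈ H.verts :=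
    fun h => ⟨H.edge_vert h, H.edge_vert (Subgraph.Adj.symm h)⟩
  have e2 : edg (i, 2) ∈ H.edgeSet → Sum.inr (i, 0) ∈ H.verts ∧ Sum.inr (i, 1) ∈ H.verts :=
    fun h => ⟨H.edge_vert h, H.edge_vert (Subgraph.Adj.symm h)⟩
  have e3 : edg (i, 3) ∈ H.edgeSet → Sum.inr (i, 0) ∈ H.verts ∧ Sum.inr (i, 2) ∈ H.verts :=
    fun h => ⟨H.edge_vert h, H.edge_vert (Subgraph.Adj.symm h)⟩
  have e4 : edg (i, 4) ∈ H.edgeSet → Sum.inr (i, 1) ∈ H.verts ∧ Sum.inr (i, 2) ∈ H.verts :=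
    fun h => ⟨H.edge_vert h, H.edge_vert (Subgraph.Adj.symm h)⟩
  rw [Fin.sum_univ_five, Fin.sum_univ_three]
  generalize (edg (i, 0) ∈ H.edgeSet) = p0 at *
  generalize (edg (i, 1) ∈ H.edgeSet) = p1 at *
  generalize (edg (i, 2) ∈ H.edgeSet) = p2 at *
  generalize (edg (i, 3) ∈ H.edgeSet) = p3 at *
  generalize (edg (i, 4) ∈ H.edgeSet) = p4 at *
  by_cases a : Sum.inl i ∈ H.verts <;> by_cases b : Sum.inr (i, 0) ∈ H.verts <;>
    by_cases c : Sum.inr (i, 1) ∈ H.verts <;> by_cases d : Sum.inr (i, 2) ∈ H.verts <;>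
    simp only [a, b, c, d, and_true, and_false, imp_false, if_true, if_false] at * <;>
    split_ifs <;> first | omega | simp_all

theorem sharpGraph_mad_eq_and_no_ifPartition (n : ℕ) (hn : 3 ≤ n) :
    IsGreatest {q : ℚ | ∃ H : (sharpGraph n).Subgraph, H.verts.Nonempty ∧
        q = 2 * (Nat.card H.edgeSet : ℚ) / (H.verts.ncard : ℚ)} (5 / 2) ∧
    ¬ ∃ A B : Set (Fin n ⊕ Fin n × Fin 3), IsIFPartition (sharpGraph n) A B := by
  refine ⟨⟨⟨⊤, ⟨Sum.inl ⟨0, by omega⟩, trivial⟩, ?_⟩, ?_⟩, no_partition n hn⟩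
  · have hv : (⊤ : (sharpGraph n).Subgraph).verts.ncard = 4 * n := by
      rw [Subgraph.verts_top, Set.ncard_univ, Nat.card_eq_fintype_card]
      simp
      ring
    rw [card_top n hn, hv]
    have : (n : ℚ) ≠ 0 := by
      have : n ≠ 0 := by omega
      exact_mod_cast this
    push_cast
    field_simp
    norm_num
  · rintro q ⟨H, hne, rfl⟩
    have hpos : (0 : ℚ) < H.verts.ncard := by
      exact_mod_cast (Set.ncard_pos (Set.toFinite _)).2 hne
    have := upper n H
    have h2 : (4 : ℚ) * Nat.card H.edgeSet ≤ 5 * H.verts.ncard := by exact_mod_cast this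
    rw [div_le_div_iff₀ hpos (by norm_num)]
    linarith
end

section
/- Let G be an assigned graph with vertex partition I ⊔ F ⊔ U satisfying all of the following: every vertex of I has degree at least 1; every vertex of U has degree at least 2; every vertex of F has degree at least 3; G contains no 3⁺-thread; no 4-vertex in U is incident to four 2-threads; no 3-vertex in F ∪ U having no neighbor in I is incident to a 2-thread; no 3-vertex in U is incident to three 1-threads all of whose bordering vertices lie in F ∪ U; and no 4-vertex in U is incident to three 2-threads and to a 1-thread whose other bordering vertex lies in F ∪ U. Then ρ_G(G) ≤ 0, i.e., |I| + 4|F| + 5|U| ≤ 4|E(G)|. -/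
open SimpleGraph

open Classical in
lemma dis_deg_eq {V : Type*} [Fintype V] (G : SimpleGraph V) (v : V) :
    deg G v = (G.neighborFinset v).card := by
  unfold deg
  rw [Nat.card_eq_fintype_card, SimpleGraph.card_neighborSet_eq_degree]
  rfl

open Classical in
lemma dis_three {V : Type*} [Fintype V] (G : SimpleGraph V) {a x y w : V} (hd : deg G a = 2)
    (hx : G.Adj a x) (hy : G.Adj a y) (hw : G.Adj a w) (h1 : x ≠ y) (h2 : x ≠ w) (h3 : y ≠ w) :
    False := by
  rw [dis_deg_eq] at hd
  have h : ({x, y, w} : Finset V) ⊆ G.neighborFinset a := by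
    intro z hz
    simp only [Finset.mem_insert, Finset.mem_singleton] at hz
    rw [SimpleGraph.mem_neighborFinset]
    rcases hz with rfl | rfl | rfl <;> assumption
  have := Finset.card_le_card h
  rw [Finset.card_eq_three.mpr ⟨x, y, w, h1, h2, h3, rfl⟩] at this
  omega

/-- A path of vertices satisfying `T` (all of degree 2) can be extended at an end. -/
lemma dis_extend {V : Type*} [Fintype V] (G : SimpleGraph V) (T : V → Prop)
    (hT : ∀ v, T v → deg G v = 2) (p : List V) (hn : p.Nodup) (hc : p.IsChain G.Adj)
    (hp : ∀ v ∈ p, T v) (w : V) (hw : w ∉ p) (hwT : T w) (a : V) (ha : a ∈ p)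
    (haw : G.Adj a w) :
    ∃ q : List V, q.length = p.length + 1 ∧ q.Nodup ∧ q.IsChain G.Adj ∧ ∀ v ∈ q, T v := by
  obtain ⟨l1, l2, rfl⟩ := List.append_of_mem ha
  rcases List.eq_nil_or_concat l1 with rfl | ⟨l1', x, rfl⟩
  · refine ⟨w :: a :: l2, by simp, ?_, ?_, ?_⟩
    · exact List.nodup_cons.mpr ⟨by simpa using hw, by simpa using hn⟩
    · exact List.isChain_cons_cons.mpr ⟨haw.symm, by simpa using hc⟩
    · intro v hv
      rcases List.mem_cons.mp hv with rfl | hv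
      · exact hwT
      · exact hp v (by simpa using hv)
  · rcases l2 with _ | ⟨y, l2'⟩
    · refine ⟨(l1' ++ [x] ++ [a]) ++ [w], by simp, ?_, ?_, ?_⟩
      · rw [List.nodup_append]
        refine ⟨by simpa using hn, by simp, ?_⟩
        intro z hz b hb hzb
        have hbw : b = w := by simpa using hb
        subst hzb
        subst hbw
        exact hw (by simpa using hz)
      · rw [List.isChain_append]
        refine ⟨by simpa using hc, by simp, ?_⟩
        intro z hz b hb
        simp at hz hb
        subst hz
        subst hb
        exact haw
      · intro v hv
        rcases List.mem_append.mp hv with hv | hv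
        · exact hp v (by simpa using hv)
        · have : v = w := by simpa using hv
          exact this ▸ hwT
    · exfalso
      have hxa : G.Adj x a := by
        simp [List.isChain_append] at hc
        tauto
      have hay : G.Adj a y := by
        simp [List.isChain_append] at hc
        tauto
      have hxy : x ≠ y := by
        rintro rfl
        simp [List.nodup_append] at hn
      have hwx : x ≠ w := by
        rintro rfl
        simp at hw
      have hwy : y ≠ w := by
        rintro rfl
        simp at hw
      exact dis_three G (hT a (hp a (by simp))) hxa.symm hay haw hxy hwx hwy

/-- There are no three consecutive 2-vertices of `U`. -/
lemma dis_nothree {V : Type*} [Fintype V] (G : SimpleGraph V) (I F U : Set V)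
    (hassign : IsAssignment I F U) (hU : ∀ v ∈ U, 2 ≤ deg G v)
    (hthread : ¬ ∃ p : List V, IsThread G I F U p ∧ 3 ≤ p.length)
    (a b c : V) (ha : a ∈ U ∧ deg G a = 2) (hb : b ∈ U ∧ deg G b = 2)
    (hc : c ∈ U ∧ deg G c = 2) (hab : G.Adj a b) (hbc : G.Adj b c) (hac : a ≠ c) : False := by
  have key : ∀ n : ℕ, ∃ p : List V, p.length = n + 3 ∧ p.Nodup ∧ p.IsChain G.Adj ∧
      ∀ v ∈ p, v ∈ U ∧ deg G v = 2 := by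
    intro n
    induction n with
    | zero =>
      refine ⟨[a, b, c], rfl, ?_, ?_, ?_⟩
      · simp [hab.ne, hbc.ne, hac]
      · simp [hab, hbc]
      · intro v hv
        simp at hv
        rcases hv with rfl | rfl | rfl <;> assumption
    | succ n ih =>
      obtain ⟨p, hl, hn, hch, hp⟩ := ih
      have hnt : ¬ IsThread G I F U p := fun h => hthread ⟨p, h, by omega⟩
      have : ∃ w, w ∉ p ∧ (∃ a ∈ p, G.Adj a w) ∧ ¬ (3 ≤ deg G w ∨ w ∈ I ∪ F) := by
        by_contra hcon
        push Not at hcon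
        apply hnt
        refine ⟨?_, hn, hch, hp, ?_⟩
        · rintro rfl
          simp at hl
        · exact hcon
      obtain ⟨w, hw, ⟨z, hz, hzw⟩, hcon⟩ := this
      have hwU : w ∈ U := by
        have : w ∈ I ∪ F ∪ U := by rw [hassign.1]; trivial
        simp only [Set.mem_union] at this hcon
        tauto
      have hwT : w ∈ U ∧ deg G w = 2 := ⟨hwU, by have := hU w hwU; omega⟩
      obtain ⟨q, hq, h⟩ := dis_extend G (fun v => v ∈ U ∧ deg G v = 2) (fun v h => h.2) p hn hch hp
        w hw hwT z hz hzw
      exact ⟨q, by omega, h⟩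
  obtain ⟨p, hl, hn, _⟩ := key (Fintype.card V)
  have := hn.length_le_card
  omega

open Classical in
/-- The charge (in half units) sent from `u` to its neighbor `v`. -/
noncomputable def disG {V : Type*} (G : SimpleGraph V) (I U : Set V) (u v : V) : ℤ :=
  if u ∈ I then 2 else if u ∈ U ∧ deg G u = 2 then 0 else
    if v ∈ U ∧ deg G v = 2 then
      (if ∃ t, G.Adj v t ∧ (t ∈ U ∧ deg G t = 2) then 2 else
        if ∃ i ∈ I, G.Adj v i then 0 else 1)
    else 0

lemma disG_nonneg {V : Type*} (G : SimpleGraph V) (I U : Set V) (u v : V) :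
    0 ≤ disG G I U u v := by
  unfold disG
  split_ifs <;> norm_num

lemma disG_le {V : Type*} (G : SimpleGraph V) (I U : Set V) (u v : V) :
    disG G I U u v ≤ 2 := by
  unfold disG
  split_ifs <;> norm_num

lemma disG_two {V : Type*} (G : SimpleGraph V) (I U : Set V) (u v : V) (hu : u ∉ I)
    (h : 2 ≤ disG G I U u v) :
    (v ∈ U ∧ deg G v = 2) ∧ ∃ t, G.Adj v t ∧ (t ∈ U ∧ deg G t = 2) := by
  unfold disG at h
  split_ifs at h <;> first | omega | tauto

lemma disG_one {V : Type*} (G : SimpleGraph V) (I U : Set V) (u v : V) (hu : u ∉ I)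
    (h : disG G I U u v = 1) :
    (v ∈ U ∧ deg G v = 2) ∧ (¬ ∃ t, G.Adj v t ∧ (t ∈ U ∧ deg G t = 2)) ∧
      ¬ ∃ i ∈ I, G.Adj v i := by
  unfold disG at h
  split_ifs at h <;> first | omega | tauto

lemma dis_sum_le {V : Type*} (s : Finset V) (f : V → ℤ) (k : ℤ) (h : ∀ v ∈ s, f v ≤ k) :
    ∑ v ∈ s, f v ≤ s.card * k := by
  simpa using Finset.sum_le_card_nsmul s f k h

open Classical in
lemma dis_sum_le_one {V : Type*} (s : Finset V) (f : V → ℤ) (k : ℤ) (h : ∀ v ∈ s, f v ≤ k)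
    (a : V) (ha : a ∈ s) : ∑ v ∈ s, f v ≤ f a + (s.card - 1) * k := by
  rw [← Finset.add_sum_erase s f ha]
  have := dis_sum_le (s.erase a) f k (fun v hv => h v (Finset.mem_of_mem_erase hv))
  rw [Finset.card_erase_of_mem ha] at this
  have hpos : 1 ≤ s.card := Finset.card_pos.mpr ⟨a, ha⟩
  push_cast [hpos] at this
  linarith

open Classical in
lemma dis_sum_le_two {V : Type*} (s : Finset V) (f : V → ℤ) (k : ℤ) (h : ∀ v ∈ s, f v ≤ k)
    (a : V) (ha : a ∈ s) (b : V) (hb : b ∈ s) (hab : b ≠ a) :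
    ∑ v ∈ s, f v ≤ f a + f b + (s.card - 2) * k := by
  rw [← Finset.add_sum_erase s f ha]
  have := dis_sum_le_one (s.erase a) f k (fun v hv => h v (Finset.mem_of_mem_erase hv)) b
    (Finset.mem_erase.mpr ⟨hab, hb⟩)
  rw [Finset.card_erase_of_mem ha] at this
  have hpos : 1 ≤ s.card := Finset.card_pos.mpr ⟨a, ha⟩
  push_cast [hpos] at this
  linarith

/-- Lemma 4.1 (discharging): if an assigned graph `G` satisfies all the structural
conditions (minimum degrees on `I`, `U`, `F`; no `3⁺`-thread; no 4-vertex in `U` incident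
to four 2-threads; no 3-vertex in `F ∪ U` without a neighbor in `I` incident to a 2-thread;
no 3-vertex in `U` incident to three 1-threads bordered in `F ∪ U`; and no 4-vertex in `U`
incident to three 2-threads and a 1-thread whose other border lies in `F ∪ U`), then
`ρ_G(G) ≤ 0`, i.e. `|I| + 4|F| + 5|U| ≤ 4|E(G)|`. -/
theorem discharging {V : Type*} [Fintype V] (G : SimpleGraph V)
    (I F U : Set V) (hassign : IsAssignment I F U)
    (hI : ∀ v ∈ I, 1 ≤ deg G v)
    (hU : ∀ v ∈ U, 2 ≤ deg G v)
    (hF : ∀ v ∈ F, 3 ≤ deg G v)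
    (hthread : ¬ ∃ p : List V, IsThread G I F U p ∧ 3 ≤ p.length)
    (h4v : ¬ ∃ v ∈ U, deg G v = 4 ∧
      ∀ u, G.Adj v u → ∃ p : List V, IsThread G I F U p ∧ p.length = 2 ∧ u ∈ p ∧ v ∉ p)
    (h3v2t : ¬ ∃ v ∈ F ∪ U, deg G v = 3 ∧ (∀ u, G.Adj v u → u ∉ I) ∧
      ∃ p : List V, IsThread G I F U p ∧ p.length = 2 ∧ BordersThread G p v)
    (h3v1t : ¬ ∃ v ∈ U, deg G v = 3 ∧
      ∀ u, G.Adj v u → ∃ p : List V, IsThread G I F U p ∧ p.length = 1 ∧ u ∈ p ∧ v ∉ p ∧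
        ∀ w, BordersThread G p w → w ∈ F ∪ U)
    (h4v21 : ¬ ∃ v ∈ U, deg G v = 4 ∧
      ∃ a, G.Adj v a ∧
        (∃ p : List V, IsThread G I F U p ∧ p.length = 1 ∧ a ∈ p ∧ v ∉ p ∧
          ∀ w, BordersThread G p w → w ≠ v → w ∈ F ∪ U) ∧
        ∀ u, G.Adj v u → u ≠ a →
          ∃ p : List V, IsThread G I F U p ∧ p.length = 2 ∧ u ∈ p ∧ v ∉ p) :
    I.ncard + 4 * F.ncard + 5 * U.ncard ≤ 4 * edgeCount G := by
  classical
  have hcov : ∀ v, v ∈ I ∨ v ∈ F ∨ v ∈ U := by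
    intro v
    have : v ∈ I ∪ F ∪ U := by rw [hassign.1]; trivial
    simp only [Set.mem_union] at this
    tauto
  have hIF : ∀ v, v ∈ I → v ∉ F := fun v h h' => Set.disjoint_left.mp hassign.2.1 h h'
  have hIU : ∀ v, v ∈ I → v ∉ U := fun v h h' => Set.disjoint_left.mp hassign.2.2.1 h h'
  have hFU : ∀ v, v ∈ F → v ∉ U := fun v h h' => Set.disjoint_left.mp hassign.2.2.2 h h'
  have hno := dis_nothree G I F U hassign hU hthread
  have hnT : ∀ w, ¬ (w ∈ U ∧ deg G w = 2) → 3 ≤ deg G w ∨ w ∈ I ∪ F := by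
    intro w hw
    rcases hcov w with h | h | h
    · right; left; exact h
    · right; right; exact h
    · left
      have := hU w h
      have : deg G w ≠ 2 := fun h' => hw ⟨h, h'⟩
      omega
  -- 2-threads and 1-threads
  have thr2 : ∀ a b, (a ∈ U ∧ deg G a = 2) → (b ∈ U ∧ deg G b = 2) → G.Adj a b →
      IsThread G I F U [a, b] := by
    intro a b ha hb hab
    refine ⟨by simp, by simp [hab.ne], ?_, ?_, ?_⟩
    · show List.IsChain G.Adj [a, b]
      simp [hab]
    · intro v hv
      simp at hv
      rcases hv with rfl | rfl <;> assumption
    · rintro w hw ⟨z, hz, hzw⟩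
      simp at hw hz
      apply hnT
      intro hT
      rcases hz with rfl | rfl
      · exact hno w z b hT ha hb hzw.symm hab hw.2
      · exact hno a z w ha hb hT hab hzw (Ne.symm hw.1)
  have thr1 : ∀ a, (a ∈ U ∧ deg G a = 2) → (¬ ∃ t, G.Adj a t ∧ (t ∈ U ∧ deg G t = 2)) →
      IsThread G I F U [a] := by
    intro a ha hn
    refine ⟨by simp, by simp, ?_, ?_, ?_⟩
    · show List.IsChain G.Adj [a]
      simp
    · intro v hv
      simp at hv
      rcases hv with rfl
      assumption
    · rintro w hw ⟨z, hz, hzw⟩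
      simp at hz
      subst hz
      exact hnT w (fun hT => hn ⟨w, hzw, hT⟩)
  -- the final charge is nonnegative everywhere
  let c : V → ℤ := fun v => if v ∈ I then 1 else if v ∈ F then 4 else 5
  have main : ∀ v, 0 ≤ 2 * (2 * (deg G v : ℤ) - c v)
      + ∑ u ∈ G.neighborFinset v, disG G I U u v - ∑ u ∈ G.neighborFinset v, disG G I U v u := by
    intro v
    have hin : 0 ≤ ∑ u ∈ G.neighborFinset v, disG G I U u v :=
      Finset.sum_nonneg (fun u _ => disG_nonneg G I U u v)
    have hin1 : ∀ u, G.Adj v u → disG G I U u v ≤ ∑ u ∈ G.neighborFinset v, disG G I U u v :=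
      fun u hu => Finset.single_le_sum (f := fun u => disG G I U u v)
        (fun u _ => disG_nonneg G I U u v) ((G.mem_neighborFinset v u).mpr hu)
    have hinI : ∀ u, G.Adj v u → u ∈ I → 2 ≤ ∑ u ∈ G.neighborFinset v, disG G I U u v := by
      intro u hu hui
      have := hin1 u hu
      have h2 : disG G I U u v = 2 := by simp [disG, hui]
      omega
    have hout := dis_sum_le (G.neighborFinset v) (fun u => disG G I U v u) 2
      (fun u _ => disG_le G I U v u)
    have hout1 := dis_sum_le_one (G.neighborFinset v) (fun u => disG G I U v u) 2
      (fun u _ => disG_le G I U v u)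
    have hout2 := dis_sum_le_two (G.neighborFinset v) (fun u => disG G I U v u) 2
      (fun u _ => disG_le G I U v u)
    have houtI : v ∉ I → ∀ u, u ∈ I → disG G I U v u = 0 := by
      intro hv u hu
      have : u ∉ U := hIU u hu
      simp [disG, hv, this]
    simp only [SimpleGraph.mem_neighborFinset] at hout1 hout2
    have hd := dis_deg_eq G v
    rw [← hd] at hout hout1 hout2
    by_cases hvI : v ∈ I
    · have := hI v hvI
      have hc : c v = 1 := by simp [c, hvI]
      rw [hc]
      linarith
    -- a 3-vertex without a neighbor in I gives at most one half to each neighbor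
    have h3le : v ∈ F ∪ U → deg G v = 3 → (∀ u, G.Adj v u → u ∉ I) →
        ∀ u, G.Adj v u → disG G I U v u ≤ 1 := by
      intro hv h3 hni u hu
      by_contra hgt
      obtain ⟨huT, t, hut, htT⟩ := disG_two G I U v u hvI (by omega)
      have hvT : ¬ (v ∈ U ∧ deg G v = 2) := by omega
      refine h3v2t ⟨v, hv, h3, hni, [u, t], thr2 u t huT htT hut, rfl, ?_, u, by simp, hu.symm⟩
      intro hm
      simp at hm
      rcases hm with h | h
      · exact hu.ne h
      · exact hvT (h ▸ htT)
    have h2thr : deg G v ≠ 2 → ∀ u, G.Adj v u → 2 ≤ disG G I U v u →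
        ∃ p : List V, IsThread G I F U p ∧ p.length = 2 ∧ u ∈ p ∧ v ∉ p := by
      intro hv2 u hu hg
      obtain ⟨huT, t, hut, htT⟩ := disG_two G I U v u hvI hg
      refine ⟨[u, t], thr2 u t huT htT hut, rfl, by simp, ?_⟩
      intro hm
      simp at hm
      rcases hm with h | h
      · exact hu.ne h
      · exact hv2 (h ▸ htT.2)
    have h1thr : ∀ u, G.Adj v u → disG G I U v u = 1 →
        ∃ p : List V, IsThread G I F U p ∧ p.length = 1 ∧ u ∈ p ∧ v ∉ p ∧
        ∀ w, BordersThread G p w → w ∈ F ∪ U := by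
      intro u hu hg
      obtain ⟨huT, hnt, hni⟩ := disG_one G I U v u hvI hg
      refine ⟨[u], thr1 u huT hnt, rfl, by simp, by simpa using hu.ne, ?_⟩
      rintro w ⟨_, z, hz, hzw⟩
      simp at hz
      subst hz
      rcases hcov w with h | h | h
      · exact absurd ⟨w, h, hzw⟩ hni
      · exact Or.inl h
      · exact Or.inr h
    by_cases hvF : v ∈ F
    · have h3 := hF v hvF
      have hc : c v = 4 := by simp [c, hvI, hvF]
      rw [hc]
      by_cases h4 : 4 ≤ deg G v
      · have : (4 : ℤ) ≤ deg G v := by exact_mod_cast h4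
        linarith
      · have h3' : deg G v = 3 := by omega
        have h3z : (deg G v : ℤ) = 3 := by exact_mod_cast h3'
        by_cases hi : ∃ u, G.Adj v u ∧ u ∈ I
        · obtain ⟨u, hu, hui⟩ := hi
          have := hinI u hu hui
          have := hout1 u hu
          have := houtI hvI u hui
          rw [h3z] at *
          linarith
        · push Not at hi
          have hle := dis_sum_le (G.neighborFinset v) (fun u => disG G I U v u) 1
            (fun u hu => h3le (Or.inl hvF) h3' hi u ((G.mem_neighborFinset v u).mp hu))
          rw [← hd] at hle
          rw [h3z] at *
          linarith
    have hvU : v ∈ U := by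
      have := hcov v
      tauto
    have hc : c v = 5 := by simp [c, hvI, hvF]
    rw [hc]
    have h2 := hU v hvU
    rcases (by omega : deg G v = 2 ∨ deg G v = 3 ∨ deg G v = 4 ∨ 5 ≤ deg G v)
      with hd' | hd' | hd' | hd'
    · have hvT : v ∈ U ∧ deg G v = 2 := ⟨hvU, hd'⟩
      have h0 : ∑ u ∈ G.neighborFinset v, disG G I U v u = 0 := by
        apply Finset.sum_eq_zero
        intro u _
        simp [disG, hvI, hvT]
      rw [h0, hd']
      suffices 2 ≤ ∑ u ∈ G.neighborFinset v, disG G I U u v by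
        push_cast
        linarith
      obtain ⟨x, y, hxy, hN⟩ := Finset.card_eq_two.mp (hd.symm.trans hd')
      have hmem : ∀ u, G.Adj v u ↔ u = x ∨ u = y := by
        intro u
        rw [← SimpleGraph.mem_neighborFinset, hN]
        simp
      have hx : G.Adj v x := (hmem x).mpr (Or.inl rfl)
      have hy : G.Adj v y := (hmem y).mpr (Or.inr rfl)
      by_cases hi : ∃ u, G.Adj v u ∧ u ∈ I
      · obtain ⟨u, hu, hui⟩ := hi
        exact hinI u hu hui
      have hi' : ¬ ∃ i ∈ I, G.Adj v i := fun ⟨i, h1, h2⟩ => hi ⟨i, h2, h1⟩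
      push Not at hi
      by_cases ht : ∃ t, G.Adj v t ∧ (t ∈ U ∧ deg G t = 2)
      · have hval : ∀ u, G.Adj v u → ¬ (u ∈ U ∧ deg G u = 2) → disG G I U u v = 2 := by
          intro u hu hnu
          unfold disG
          rw [if_neg (hi u hu), if_neg hnu, if_pos hvT, if_pos ht]
        by_cases hxT : x ∈ U ∧ deg G x = 2
        · have hyT : ¬ (y ∈ U ∧ deg G y = 2) := fun hyT => hno x v y hxT hvT hyT hx.symm hy hxy
          have := hin1 y hy
          rw [hval y hy hyT] at this
          exact this
        · have := hin1 x hx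
          rw [hval x hx hxT] at this
          exact this
      · have hval : ∀ u, G.Adj v u → disG G I U u v = 1 := by
          intro u hu
          unfold disG
          rw [if_neg (hi u hu), if_neg (fun h => ht ⟨u, hu, h⟩), if_pos hvT, if_neg ht, if_neg hi']
        rw [hN, Finset.sum_pair hxy, hval x hx, hval y hy]
        norm_num
    · have h3z : (deg G v : ℤ) = 3 := by exact_mod_cast hd'
      by_cases hi : ∃ u, G.Adj v u ∧ u ∈ I
      · obtain ⟨u, hu, hui⟩ := hi
        have := hinI u hu hui
        have := hout1 u hu
        have := houtI hvI u hui
        rw [h3z] at *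
        linarith
      · push Not at hi
        have hle1 := h3le (Or.inr hvU) hd' hi
        have : ∃ u, G.Adj v u ∧ disG G I U v u ≠ 1 := by
          by_contra hcon
          push Not at hcon
          exact h3v1t ⟨v, hvU, hd', fun u hu => h1thr u hu (hcon u hu)⟩
        obtain ⟨u, hu, hne⟩ := this
        have hu1 := hle1 u hu
        have hle := dis_sum_le_one (G.neighborFinset v) (fun u => disG G I U v u) 1
            (fun u hu => hle1 u ((G.mem_neighborFinset v u).mp hu)) u
            ((G.mem_neighborFinset v u).mpr hu)
        rw [← hd] at hle
        have : disG G I U v u ≤ 0 := by omega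
        rw [h3z] at *
        linarith
    · have h4z : (deg G v : ℤ) = 4 := by exact_mod_cast hd'
      have : ∃ a, G.Adj v a ∧ disG G I U v a < 2 := by
        by_contra hcon
        push Not at hcon
        exact h4v ⟨v, hvU, hd', fun u hu => h2thr (by omega) u hu (hcon u hu)⟩
      obtain ⟨a, ha, hlt⟩ := this
      have ha0 := disG_nonneg G I U v a
      by_cases h1 : disG G I U v a = 1
      · have : ∃ b, G.Adj v b ∧ b ≠ a ∧ disG G I U v b < 2 := by
          by_contra hcon
          push Not at hcon
          obtain ⟨p, hp1, hp2, hp3, hp4, hp5⟩ := h1thr a ha h1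
          exact h4v21 ⟨v, hvU, hd', a, ha, ⟨p, hp1, hp2, hp3, hp4, fun w hw _ => hp5 w hw⟩,
            fun u hu hua => h2thr (by omega) u hu (hcon u hu hua)⟩
        obtain ⟨b, hb, hba, hblt⟩ := this
        have := hout2 a ha b hb hba
        rw [h4z] at *
        linarith
      · have := hout1 a ha
        have : disG G I U v a ≤ 0 := by omega
        rw [h4z] at *
        linarith
    · have : (5 : ℤ) ≤ deg G v := by exact_mod_cast hd'
      linarith
  -- sum up
  have hsum := Finset.sum_nonneg (fun v (_ : v ∈ Finset.univ) => main v)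
  rw [Finset.sum_sub_distrib, Finset.sum_add_distrib] at hsum
  have hcomm : ∑ v, ∑ u ∈ G.neighborFinset v, disG G I U u v
      = ∑ v, ∑ u ∈ G.neighborFinset v, disG G I U v u := by
    apply Finset.sum_comm'
    intro x y
    simp [SimpleGraph.adj_comm]
  rw [hcomm, add_sub_cancel_right, ← Finset.mul_sum, Finset.sum_sub_distrib,
    ← Finset.mul_sum] at hsum
  have hdeg : ∑ v, (deg G v : ℤ) = 2 * (edgeCount G : ℤ) := by
    have h := G.sum_degrees_eq_twice_card_edges
    have he : edgeCount G = G.edgeFinset.card := by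
      unfold edgeCount
      rw [Nat.card_eq_fintype_card, SimpleGraph.edgeFinset_card]
    rw [he]
    rw [← Nat.cast_sum]
    have h2 : ∑ v, deg G v = 2 * G.edgeFinset.card := by
      rw [← h]
      exact Finset.sum_congr rfl (fun v _ => dis_deg_eq G v)
    rw [h2]
    push_cast
    ring
  have hind : ∀ S : Set V, ∑ v, (if v ∈ S then (1 : ℤ) else 0) = (S.ncard : ℤ) := by
    intro S
    rw [Finset.sum_boole, Set.ncard_eq_toFinset_card' S]
    congr 2
    ext v
    simp
  have hc : ∑ v, c v = I.ncard + 4 * F.ncard + 5 * U.ncard := by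
    rw [← hind I, ← hind F, ← hind U, Finset.mul_sum, Finset.mul_sum, ← Finset.sum_add_distrib,
      ← Finset.sum_add_distrib]
    apply Finset.sum_congr rfl
    intro v _
    rcases hcov v with h | h | h
    · simp [c, h, hIF v h, hIU v h]
    · have : v ∉ I := fun h' => hIF v h' h
      simp [c, h, this, hFU v h]
    · have h1 : v ∉ I := fun h' => hIU v h' h
      have h2 : v ∉ F := fun h' => hFU v h' h
      simp [c, h, h1, h2]
  rw [hdeg, hc] at hsum
  zify
  linarith
end
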